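/- arXiv:2410.06132 — 3 statements merged into one kernel-verified Lean document; each statement's English description precedes it below -/
import Mathlib

section
/- There exist absolute constants C and C' such that the following holds. Let G be a bipartite graph with parts X₁ and X₂, each of size N, which is (ε, δ)-super-regular, and suppose N is sufficiently large in terms of ε and δ. Then for any d̄ with 0 < d̄ ≤ δ − Cε such that d̄N² is an integer, G contains a spanning subgraph whose density is exactly d̄ and which is ε'-super-regular, where ε' = C'ε^{1/2}. -/
open Finset
open scoped Classical

/-- The density of the pair of vertex sets `(A, B)` in the graph `G`. -/
noncomputable def edgeDensityR {V : Type} (G : SimpleGraph V) (A B : Finset V) : ℝ :=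
  (∑ a ∈ A, ((B.filter fun b => G.Adj a b).card : ℝ)) / ((A.card : ℝ) * (B.card : ℝ))

/-- The pair `(A, B)` is `ε`-regular in `G`. -/
noncomputable def IsRegularPair {V : Type} (G : SimpleGraph V) (A B : Finset V) (ε : ℝ) : Prop :=
  ∀ X ⊆ A, ∀ Y ⊆ B, ε * A.card ≤ X.card → ε * B.card ≤ Y.card →
    |edgeDensityR G X Y - edgeDensityR G A B| ≤ ε

/-- The pair `(A, B)` is `(ε, δ)`-super-regular in `G`. -/
noncomputable def IsSuperRegularPair {V : Type} (G : SimpleGraph V) (A B : Finset V)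
    (ε δ : ℝ) (N : ℕ) : Prop :=
  IsRegularPair G A B ε ∧ A.card = N ∧ B.card = N ∧
    (∀ v ∈ A, δ * N ≤ ((B.filter fun b => G.Adj v b).card : ℝ)) ∧
    (∀ v ∈ B, δ * N ≤ ((A.filter fun a => G.Adj v a).card : ℝ))

/-- The pair `(A, B)` is `ε`-super-regular in `G`: it is `ε`-regular,
`|A| = |B| = N`, and every vertex on one side has between `(d - ε)N` and
`(d + ε)N` neighbours on the other side, where `d` is the density of the pair. -/
noncomputable def IsEpsSuperRegularPair {V : Type} (G : SimpleGraph V) (A B : Finset V)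
    (ε : ℝ) (N : ℕ) : Prop :=
  IsRegularPair G A B ε ∧ A.card = N ∧ B.card = N ∧
    (∀ v ∈ A, (edgeDensityR G A B - ε) * N ≤ ((B.filter fun b => G.Adj v b).card : ℝ) ∧
      ((B.filter fun b => G.Adj v b).card : ℝ) ≤ (edgeDensityR G A B + ε) * N) ∧
    (∀ v ∈ B, (edgeDensityR G A B - ε) * N ≤ ((A.filter fun a => G.Adj v a).card : ℝ) ∧
      ((A.filter fun a => G.Adj v a).card : ℝ) ≤ (edgeDensityR G A B + ε) * N)


/-- Along a swap direction, `∏ (1 + w μ)` is a concave quadratic. -/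
lemma swap_prod {α : Type} (S : Finset α) (w : α → ℝ) (hw : ∀ x, 0 ≤ w x ∧ w x ≤ 1) (e f : α)
    (hef : e ≠ f) (μ : ℝ) (hμ : -1 ≤ μ) :
    ∃ b d : ℝ, 0 ≤ d ∧ ∀ s : ℝ,
      ∏ x ∈ S, (1 + (w x + s * ((if x = e then 1 else 0) - (if x = f then 1 else 0))) * μ)
        = ∏ x ∈ S, (1 + w x * μ) + b * s - d * s ^ 2 := by
  have hpos : ∀ x, 0 ≤ 1 + w x * μ := fun x => by nlinarith [hw x]
  have key : ∀ (R : Finset α), e ∉ R → f ∉ R → ∀ s : ℝ,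
      ∏ x ∈ R, (1 + (w x + s * ((if x = e then 1 else 0) - (if x = f then 1 else 0))) * μ)
        = ∏ x ∈ R, (1 + w x * μ) := by
    intro R he hf s
    refine Finset.prod_congr rfl fun x hx => ?_
    have h1 : x ≠ e := fun h => he (h ▸ hx)
    have h2 : x ≠ f := fun h => hf (h ▸ hx)
    simp [h1, h2]
  by_cases he : e ∈ S
  · by_cases hf : f ∈ S
    · have hf' : f ∈ S.erase e := Finset.mem_erase.2 ⟨hef.symm, hf⟩
      have k := key ((S.erase e).erase f) (by simp) (by simp)
      refine ⟨(∏ x ∈ (S.erase e).erase f, (1 + w x * μ)) * (μ * (1 + w f * μ) - μ * (1 + w e * μ)),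
        (∏ x ∈ (S.erase e).erase f, (1 + w x * μ)) * μ ^ 2,
        mul_nonneg (Finset.prod_nonneg fun x _ => hpos x) (sq_nonneg _), fun s => ?_⟩
      rw [← Finset.mul_prod_erase S _ he, ← Finset.mul_prod_erase _ _ hf', k s,
        ← Finset.mul_prod_erase S (fun x => 1 + w x * μ) he,
        ← Finset.mul_prod_erase _ (fun x => 1 + w x * μ) hf']
      simp only [if_true, if_neg hef, if_neg hef.symm]
      ring
    · have k := key (S.erase e) (by simp) (fun h => hf (Finset.mem_of_mem_erase h))
      refine ⟨(∏ x ∈ S.erase e, (1 + w x * μ)) * μ, 0, le_rfl, fun s => ?_⟩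
      rw [← Finset.mul_prod_erase S _ he, k s, ← Finset.mul_prod_erase S (fun x => 1 + w x * μ) he]
      simp only [if_true, if_neg hef]
      ring
  · by_cases hf : f ∈ S
    · have k := key (S.erase f) (fun h => he (Finset.mem_of_mem_erase h)) (by simp)
      refine ⟨-(∏ x ∈ S.erase f, (1 + w x * μ)) * μ, 0, le_rfl, fun s => ?_⟩
      rw [← Finset.mul_prod_erase S _ hf, k s, ← Finset.mul_prod_erase S (fun x => 1 + w x * μ) hf]
      simp only [if_true, if_neg hef.symm]
      ring
    · exact ⟨0, 0, le_rfl, fun s => by rw [key S he hf s]; ring⟩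

/-- Pipage rounding with a pessimistic estimator, preserving the total exactly. -/
lemma pipage {α ι : Type} (E : Finset α) (z : ℕ) (I : Finset ι) (S : ι → Finset α)
    (c μ : ι → ℝ) (hc : ∀ i, 0 ≤ c i) (hμ : ∀ i, -1 ≤ μ i) (n : ℕ) :
    ∀ w : α → ℝ, (∀ x, 0 ≤ w x ∧ w x ≤ 1) → (∀ x, x ∉ E → w x = 0) → ∑ x ∈ E, w x = z →
      (E.filter fun x => w x ≠ 0 ∧ w x ≠ 1).card ≤ n →
      ∃ T ⊆ E, T.card = z ∧
        ∑ i ∈ I, c i * ∏ x ∈ S i, (1 + (if x ∈ T then 1 else 0) * μ i) ≤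
          ∑ i ∈ I, c i * ∏ x ∈ S i, (1 + w x * μ i) := by
  have base : ∀ w : α → ℝ, (∀ x, x ∉ E → w x = 0) → ∑ x ∈ E, w x = z →
      (∀ x ∈ E, w x = 0 ∨ w x = 1) →
      ∃ T ⊆ E, T.card = z ∧
        ∑ i ∈ I, c i * ∏ x ∈ S i, (1 + (if x ∈ T then 1 else 0) * μ i) ≤
          ∑ i ∈ I, c i * ∏ x ∈ S i, (1 + w x * μ i) := by
    intro w hE hz h01
    have hw : ∀ x, w x = if x ∈ E.filter (fun x => w x = 1) then 1 else 0 := by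
      intro x
      by_cases hx : x ∈ E
      · rcases h01 x hx with h | h <;> simp [hx, h]
      · simp [hx, hE x hx]
    refine ⟨E.filter (fun x => w x = 1), Finset.filter_subset _ _, ?_, ?_⟩
    · have : ∑ x ∈ E, w x = ((E.filter (fun x => w x = 1)).card : ℝ) := by
        rw [Finset.card_filter]
        push_cast
        refine Finset.sum_congr rfl fun x hx => ?_
        rcases h01 x hx with h | h <;> simp [h]
      rw [hz] at this
      exact_mod_cast this.symm
    · refine le_of_eq (Finset.sum_congr rfl fun i _ => ?_)
      congr 1
      refine Finset.prod_congr rfl fun x _ => ?_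
      rw [← hw x]
  induction n with
  | zero =>
    intro w hw hE hz hn
    refine base w hE hz fun x hx => ?_
    by_contra hcon
    push Not at hcon
    have : x ∈ E.filter fun x => w x ≠ 0 ∧ w x ≠ 1 := by simp [hx, hcon]
    rw [Finset.card_eq_zero.1 (Nat.le_zero.1 hn)] at this
    simp at this
  | succ n ih =>
    intro w hw hE hz hn
    by_cases h01 : ∀ x ∈ E, w x = 0 ∨ w x = 1
    · exact base w hE hz h01
    push Not at h01
    obtain ⟨e, he, he0, he1⟩ := h01
    have hex : ∃ f ∈ E, f ≠ e ∧ w f ≠ 0 ∧ w f ≠ 1 := by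
      by_contra hcon
      push Not at hcon
      have h1 : ∑ x ∈ E.erase e, w x = (((E.erase e).filter (fun x => w x = 1)).card : ℝ) := by
        rw [Finset.card_filter]
        push_cast
        refine Finset.sum_congr rfl fun x hx => ?_
        rw [Finset.mem_erase] at hx
        by_cases h0 : w x = 0
        · simp [h0]
        · simp [hcon x hx.2 hx.1 h0]
      have h2 := Finset.add_sum_erase E w he
      rw [h1, hz] at h2
      have hpos : 0 < w e := lt_of_le_of_ne (hw e).1 (Ne.symm he0)
      have hlt : w e < 1 := lt_of_le_of_ne (hw e).2 he1
      generalize ((E.erase e).filter (fun x => w x = 1)).card = m at h2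
      have h3 : (m : ℝ) < z := by linarith
      have h4 : (z : ℝ) < m + 1 := by linarith
      have h5 : m < z := by exact_mod_cast h3
      have h6 : z < m + 1 := by exact_mod_cast h4
      omega
    obtain ⟨f, hf, hfe, hf0, hf1⟩ := hex
    have e0 : 0 < w e := lt_of_le_of_ne (hw e).1 (Ne.symm he0)
    have e1 : w e < 1 := lt_of_le_of_ne (hw e).2 he1
    have f0 : 0 < w f := lt_of_le_of_ne (hw f).1 (Ne.symm hf0)
    have f1 : w f < 1 := lt_of_le_of_ne (hw f).2 hf1
    set W : ℝ → α → ℝ := fun s x =>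
      w x + s * ((if x = e then 1 else 0) - (if x = f then 1 else 0)) with hW
    have We : ∀ s, W s e = w e + s := by intro s; simp [hW, hfe.symm]
    have Wf : ∀ s, W s f = w f - s := by intro s; simp [hW, hfe]; ring
    have Wo : ∀ s x, x ≠ e → x ≠ f → W s x = w x := by intro s x h1 h2; simp [hW, h1, h2]
    -- a single application of the induction hypothesis
    have step : ∀ s : ℝ, (0 ≤ w e + s ∧ w e + s ≤ 1) → (0 ≤ w f - s ∧ w f - s ≤ 1) →
        (w e + s = 0 ∨ w e + s = 1 ∨ w f - s = 0 ∨ w f - s = 1) →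
        ∃ T ⊆ E, T.card = z ∧
        ∑ i ∈ I, c i * ∏ x ∈ S i, (1 + (if x ∈ T then 1 else 0) * μ i) ≤
          ∑ i ∈ I, c i * ∏ x ∈ S i, (1 + W s x * μ i) := by
      intro s h1 h2 h3
      apply ih (W s)
      · intro x
        by_cases hxe : x = e
        · rw [hxe, We]; exact h1
        by_cases hxf : x = f
        · rw [hxf, Wf]; exact h2
        rw [Wo s x hxe hxf]; exact hw x
      · intro x hx
        rw [Wo s x (fun h => hx (h ▸ he)) (fun h => hx (h ▸ hf))]; exact hE x hx
      · simp only [hW, Finset.sum_add_distrib, ← Finset.mul_sum, Finset.sum_sub_distrib,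
          Finset.sum_ite_eq', he, hf, if_true, hz]
        ring
      · have hss : (E.filter fun x => W s x ≠ 0 ∧ W s x ≠ 1) ⊂
            (E.filter fun x => w x ≠ 0 ∧ w x ≠ 1) := by
          rw [Finset.ssubset_iff_of_subset]
          · rcases h3 with h | h | h | h
            · exact ⟨e, by simp [he, he0, he1], by simp [We, h]⟩
            · exact ⟨e, by simp [he, he0, he1], by simp [We, h]⟩
            · exact ⟨f, by simp [hf, hf0, hf1], by simp [Wf, h]⟩
            · exact ⟨f, by simp [hf, hf0, hf1], by simp [Wf, h]⟩
          · intro x hx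
            rw [Finset.mem_filter] at hx ⊢
            refine ⟨hx.1, ?_⟩
            by_cases hxe : x = e
            · rw [hxe]; exact ⟨he0, he1⟩
            by_cases hxf : x = f
            · rw [hxf]; exact ⟨hf0, hf1⟩
            rw [← Wo s x hxe hxf]; exact hx.2
        have := Finset.card_lt_card hss
        omega
    have hquad : ∃ b d : ℝ, 0 ≤ d ∧ ∀ s : ℝ,
        ∑ i ∈ I, c i * ∏ x ∈ S i, (1 + W s x * μ i) =
          ∑ i ∈ I, c i * ∏ x ∈ S i, (1 + w x * μ i) + b * s - d * s ^ 2 := by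
      have h := fun i => swap_prod (S i) w hw e f hfe.symm (μ i) (hμ i)
      choose b d hd hs using h
      refine ⟨∑ i ∈ I, c i * b i, ∑ i ∈ I, c i * d i,
        Finset.sum_nonneg fun i _ => mul_nonneg (hc i) (hd i), fun s => ?_⟩
      rw [Finset.sum_mul, Finset.sum_mul, ← Finset.sum_add_distrib, ← Finset.sum_sub_distrib]
      refine Finset.sum_congr rfl fun i _ => ?_
      simp only [hW]
      rw [hs i s]
      ring
    obtain ⟨b, d, hd, hs⟩ := hquad
    by_cases hb : b ≤ 0
    · -- move in the positive direction
      have : ∃ s : ℝ, 0 ≤ s ∧ (0 ≤ w e + s ∧ w e + s ≤ 1) ∧ (0 ≤ w f - s ∧ w f - s ≤ 1) ∧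
        (w e + s = 0 ∨ w e + s = 1 ∨ w f - s = 0 ∨ w f - s = 1) := by
        rcases le_total (1 - w e) (w f) with h | h
        · exact ⟨1 - w e, by linarith, by constructor <;> linarith, by constructor <;> linarith,
            Or.inr (Or.inl (by ring))⟩
        · exact ⟨w f, by linarith, by constructor <;> linarith, by constructor <;> linarith,
            Or.inr (Or.inr (Or.inl (by ring)))⟩
      obtain ⟨s, s0, h1, h2, h3⟩ := this
      obtain ⟨T, hT, hTc, hle⟩ := step s h1 h2 h3
      refine ⟨T, hT, hTc, hle.trans ?_⟩
      rw [hs s]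
      nlinarith [mul_nonneg hd (sq_nonneg s), mul_nonneg (neg_nonneg.2 hb) s0]
    · have : ∃ s : ℝ, s ≤ 0 ∧ (0 ≤ w e + s ∧ w e + s ≤ 1) ∧ (0 ≤ w f - s ∧ w f - s ≤ 1) ∧
        (w e + s = 0 ∨ w e + s = 1 ∨ w f - s = 0 ∨ w f - s = 1) := by
        rcases le_total (w e) (1 - w f) with h | h
        · exact ⟨- w e, by linarith, by constructor <;> linarith, by constructor <;> linarith,
            Or.inl (by ring)⟩
        · exact ⟨w f - 1, by linarith, by constructor <;> linarith, by constructor <;> linarith,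
            Or.inr (Or.inr (Or.inr (by ring)))⟩
      obtain ⟨s, s0, h1, h2, h3⟩ := this
      obtain ⟨T, hT, hTc, hle⟩ := step s h1 h2 h3
      refine ⟨T, hT, hTc, hle.trans ?_⟩
      rw [hs s]
      push Not at hb
      nlinarith [mul_nonneg hd (sq_nonneg s), mul_nonneg hb.le (neg_nonneg.2 s0)]

/-- Rounding of a fractional weighting, with Chernoff-type deviation bounds on a family. -/
lemma rounding {α ι : Type} [Fintype ι] (E : Finset α) (z : ℕ) (S : ι → Finset α)
    (w : α → ℝ) (hw : ∀ x, 0 ≤ w x ∧ w x ≤ 1) (hE : ∀ x, x ∉ E → w x = 0)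
    (hz : ∑ x ∈ E, w x = z) (l : ℝ) (hl0 : 0 < l) (hl1 : l ≤ 1) (t m : ι → ℝ)
    (hm : ∀ i, ∑ x ∈ S i, w x ≤ m i)
    (hsum : ∑ i, 2 * Real.exp (l ^ 2 * m i - l * t i) < 1) :
    ∃ T ⊆ E, T.card = z ∧ ∀ i (U : Finset α), (∀ x, x ∈ U ↔ x ∈ S i ∧ x ∈ T) →
      |(U.card : ℝ) - ∑ x ∈ S i, w x| ≤ t i := by
  let sg : Bool → ℝ := fun b => if b then l else -l
  have hsg : ∀ b, |sg b| ≤ 1 ∧ sg b ^ 2 = l ^ 2 := by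
    intro b
    cases b <;> simp [sg, abs_of_pos hl0, hl1]
  obtain ⟨T, hT, hTc, hle⟩ := pipage E z (Finset.univ : Finset (ι × Bool)) (fun i => S i.1)
    (fun i => Real.exp (- sg i.2 * ∑ x ∈ S i.1, w x - l * t i.1))
    (fun i => Real.exp (sg i.2) - 1) (fun i => (Real.exp_pos _).le)
    (fun i => by have := Real.exp_pos (sg i.2); linarith) _ w hw hE hz le_rfl
  refine ⟨T, hT, hTc, ?_⟩
  have hR : ∑ i : ι × Bool, Real.exp (- sg i.2 * ∑ x ∈ S i.1, w x - l * t i.1) *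
      ∏ x ∈ S i.1, (1 + w x * (Real.exp (sg i.2) - 1)) < 1 := by
    refine lt_of_le_of_lt ?_ hsum
    rw [Fintype.sum_prod_type]
    refine Finset.sum_le_sum fun i _ => ?_
    have hb : ∀ b : Bool, Real.exp (- sg b * ∑ x ∈ S i, w x - l * t i) *
      ∏ x ∈ S i, (1 + w x * (Real.exp (sg b) - 1)) ≤ Real.exp (l ^ 2 * m i - l * t i) := by
      intro b
      have h1 : ∏ x ∈ S i, (1 + w x * (Real.exp (sg b) - 1)) ≤
          Real.exp ((sg b + l ^ 2) * ∑ x ∈ S i, w x) := by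
        rw [Finset.mul_sum, Real.exp_sum]
        refine Finset.prod_le_prod (fun x _ => ?_) (fun x _ => ?_)
        · have := Real.exp_pos (sg b)
          nlinarith [hw x]
        · have h2 := Real.abs_exp_sub_one_sub_id_le (hsg b).1
          rw [(hsg b).2] at h2
          have h3 := (abs_le.1 h2).2
          have h4 := Real.add_one_le_exp ((sg b + l ^ 2) * w x)
          nlinarith [(hw x).1, mul_le_mul_of_nonneg_left h3 (hw x).1]
      refine (mul_le_mul_of_nonneg_left h1 (Real.exp_pos _).le).trans ?_
      rw [← Real.exp_add]
      apply Real.exp_le_exp.2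
      nlinarith [hm i, mul_le_mul_of_nonneg_left (hm i) (sq_nonneg l)]
    rw [Fintype.sum_bool]
    linarith [hb true, hb false]
  have hlt := lt_of_le_of_lt hle hR
  intro i U hU
  obtain rfl : U = (S i).filter (· ∈ T) := by ext x; rw [hU x, Finset.mem_filter]
  have hone : ∀ b : Bool, sg b * ((((S i).filter (· ∈ T)).card : ℝ) - ∑ x ∈ S i, w x) ≤ l * t i := by
    intro b
    have h1 : Real.exp (- sg b * ∑ x ∈ S i, w x - l * t i) *
        ∏ x ∈ S i, (1 + (if x ∈ T then 1 else 0) * (Real.exp (sg b) - 1)) < 1 := by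
      refine lt_of_le_of_lt ?_ hlt
      refine Finset.single_le_sum (f := fun j : ι × Bool =>
        Real.exp (- sg j.2 * ∑ x ∈ S j.1, w x - l * t j.1) *
        ∏ x ∈ S j.1, (1 + (if x ∈ T then 1 else 0) * (Real.exp (sg j.2) - 1)))
        (fun j _ => ?_) (Finset.mem_univ (i, b))
      refine mul_nonneg (Real.exp_pos _).le (Finset.prod_nonneg fun x _ => ?_)
      have := Real.exp_pos (sg j.2)
      split_ifs <;> linarith
    have h2 : ∏ x ∈ S i, (1 + (if x ∈ T then 1 else 0) * (Real.exp (sg b) - 1)) =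
        Real.exp (sg b * (((S i).filter (· ∈ T)).card : ℝ)) := by
      rw [mul_comm (sg b), Real.exp_nat_mul, ← Finset.prod_const, Finset.prod_filter]
      refine Finset.prod_congr rfl fun x _ => ?_
      split_ifs <;> ring
    rw [h2, ← Real.exp_add, Real.exp_lt_one_iff] at h1
    linarith
  have ht := hone true
  have hf := hone false
  simp only [sg, if_true] at ht
  simp only [sg, Bool.false_eq_true, if_false] at hf
  rw [abs_le]
  constructor <;> nlinarith

lemma numeric (η : ℝ) (hη : 0 < η) : ∃ N₀ : ℕ, ∀ N : ℕ, N₀ ≤ N → 0 < N ∧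
    2 * (N : ℝ) * (2 * Real.exp ((η / 2) ^ 2 * N - η / 2 * (η * N))) +
      (16 : ℝ) ^ N * (2 * Real.exp ((η / 2) ^ 2 * (N : ℝ) ^ 2 - η / 2 * (η * (N : ℝ) ^ 2))) < 1 := by
  set κ : ℝ := η ^ 2 / 4 with hκ
  have hκ0 : 0 < κ := by positivity
  obtain ⟨M, hM⟩ := exists_nat_gt (max (32 / κ ^ 2) (17 / κ))
  refine ⟨M + 1, fun N hN => ?_⟩
  have hN0 : 0 < N := by omega
  have hN1 : (1 : ℝ) ≤ N := by exact_mod_cast hN0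
  have hMN : (M : ℝ) ≤ N := by exact_mod_cast (by omega : M ≤ N)
  have h1 : 32 / κ ^ 2 < N := lt_of_le_of_lt (le_max_left _ _) (hM.trans_le hMN)
  have h2 : 17 / κ < N := lt_of_le_of_lt (le_max_right _ _) (hM.trans_le hMN)
  rw [div_lt_iff₀ (by positivity)] at h1 h2
  refine ⟨hN0, ?_⟩
  have e1 : (η / 2) ^ 2 * N - η / 2 * (η * N) = -(κ * N) := by rw [hκ]; ring
  have e2 : (η / 2) ^ 2 * (N : ℝ) ^ 2 - η / 2 * (η * (N : ℝ) ^ 2) = -(κ * N ^ 2) := by rw [hκ]; ring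
  rw [e1, e2]
  have b1 : 2 * (N : ℝ) * (2 * Real.exp (-(κ * N))) ≤ 1 / 4 := by
    rw [Real.exp_neg]
    have := Real.quadratic_le_exp_of_nonneg (x := κ * N) (by positivity)
    have h3 : 16 * (N : ℝ) ≤ Real.exp (κ * N) := by nlinarith [mul_pos hκ0 (by linarith : (0:ℝ) < N)]
    have h4 : 0 < Real.exp (κ * N) := Real.exp_pos _
    rw [show 2 * (N : ℝ) * (2 * (Real.exp (κ * N))⁻¹) = 4 * N / Real.exp (κ * N) by
      field_simp; ring, div_le_iff₀ h4]
    linarith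
  have b2 : (16 : ℝ) ^ N * (2 * Real.exp (-(κ * N ^ 2))) ≤ 1 / 2 := by
    have h5 : (16 : ℝ) ≤ Real.exp 15 := by
      have := Real.add_one_le_exp (15 : ℝ); linarith
    have h6 : (16 : ℝ) ^ N ≤ Real.exp (15 * N) := by
      rw [mul_comm, Real.exp_nat_mul]
      exact pow_le_pow_left₀ (by norm_num) h5 N
    have h7 : Real.exp (-(κ * N ^ 2)) ≤ Real.exp (-(17 * N)) := by
      apply Real.exp_le_exp.2
      nlinarith
    have h8 : (16 : ℝ) ^ N * (2 * Real.exp (-(κ * N ^ 2))) ≤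
        Real.exp (15 * N) * (2 * Real.exp (-(17 * N))) := by gcongr
    have h9 : Real.exp (15 * N) * (2 * Real.exp (-(17 * N))) = 2 * Real.exp (-2 * (N : ℝ)) := by
      rw [mul_left_comm, ← Real.exp_add]; ring_nf
    have h10 : Real.exp (-2 * (N : ℝ)) ≤ Real.exp (-2) := by
      apply Real.exp_le_exp.2; linarith
    have h11 : Real.exp (-2) ≤ 1 / 7 + 1/1000 := by
      have : Real.exp (-2) = (Real.exp (-1)) ^ 2 := by rw [← Real.exp_nat_mul]; norm_num
      rw [this]
      have := Real.exp_neg_one_lt_d9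
      nlinarith [Real.exp_pos (-1)]
    linarith
  linarith

lemma edgeSum_symm {V : Type} (G : SimpleGraph V) (A B : Finset V) :
    ∑ a ∈ A, ((B.filter fun b => G.Adj a b).card : ℝ) =
      ∑ b ∈ B, ((A.filter fun a => G.Adj b a).card : ℝ) := by
  simp only [Finset.card_filter]
  push_cast
  rw [Finset.sum_comm]
  simp only [G.adj_comm]

lemma edgeDensityR_symm {V : Type} (G : SimpleGraph V) (A B : Finset V) :
    edgeDensityR G A B = edgeDensityR G B A := by
  unfold edgeDensityR
  rw [edgeSum_symm, mul_comm]

lemma IsRegularPair.symm' {V : Type} {G : SimpleGraph V} {A B : Finset V} {ε : ℝ}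
    (h : IsRegularPair G A B ε) : IsRegularPair G B A ε := by
  intro X hX Y hY h1 h2
  rw [edgeDensityR_symm G X Y, edgeDensityR_symm G B A]
  exact h Y hY X hX h2 h1

lemma bad_card {V : Type} (G : SimpleGraph V) (A B : Finset V) (ε : ℝ) (N : ℕ) (hN : 0 < N)
    (hA : A.card = N) (hB : B.card = N) (h : IsRegularPair G A B ε) (hε : 0 < ε) (hε1 : ε ≤ 1) :
    ((A.filter fun a => ¬ |((B.filter fun b => G.Adj a b).card : ℝ) - edgeDensityR G A B * N|
      ≤ ε * N).card : ℝ) ≤ 2 * ε * N := by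
  have hNr : (0 : ℝ) < N := by exact_mod_cast hN
  set d := edgeDensityR G A B with hd
  set dg : V → ℝ := fun a => ((B.filter fun b => G.Adj a b).card : ℝ) with hdg
  have hBε : ε * B.card ≤ B.card := by rw [hB]; nlinarith
  have hp : ((A.filter fun a => d * N + ε * N < dg a).card : ℝ) ≤ ε * N := by
    by_contra hcon
    push Not at hcon
    set S := A.filter fun a => d * N + ε * N < dg a with hS
    have hSpos : (0 : ℝ) < S.card := by nlinarith [mul_pos hε hNr]
    have h1 := (abs_le.1 (h S (Finset.filter_subset _ _) B subset_rfl (by rw [hA]; exact hcon.le) hBε)).2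
    have h2 : (S.card : ℝ) * (d * N + ε * N) < ∑ a ∈ S, dg a := by
      rw [← nsmul_eq_mul, ← Finset.sum_const]
      refine Finset.sum_lt_sum_of_nonempty ?_ fun a ha => (Finset.mem_filter.1 ha).2
      rw [← Finset.card_pos]; exact_mod_cast hSpos
    have h3 : edgeDensityR G S B ≤ d + ε := by linarith
    unfold edgeDensityR at h3
    rw [hB, div_le_iff₀ (by positivity)] at h3
    simp only [hdg] at h2
    nlinarith
  have hm : ((A.filter fun a => dg a < d * N - ε * N).card : ℝ) ≤ ε * N := by
    by_contra hcon
    push Not at hcon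
    set S := A.filter fun a => dg a < d * N - ε * N with hS
    have hSpos : (0 : ℝ) < S.card := by nlinarith [mul_pos hε hNr]
    have h1 := (abs_le.1 (h S (Finset.filter_subset _ _) B subset_rfl (by rw [hA]; exact hcon.le) hBε)).1
    have h2 : ∑ a ∈ S, dg a < (S.card : ℝ) * (d * N - ε * N) := by
      rw [← nsmul_eq_mul, ← Finset.sum_const]
      refine Finset.sum_lt_sum_of_nonempty ?_ fun a ha => (Finset.mem_filter.1 ha).2
      rw [← Finset.card_pos]; exact_mod_cast hSpos
    have h3 : d - ε ≤ edgeDensityR G S B := by linarith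
    unfold edgeDensityR at h3
    rw [hB, le_div_iff₀ (by positivity)] at h3
    simp only [hdg] at h2
    nlinarith
  have hsub : (A.filter fun a => ¬ |dg a - d * N| ≤ ε * N) ⊆
      (A.filter fun a => d * N + ε * N < dg a) ∪ (A.filter fun a => dg a < d * N - ε * N) := by
    intro a ha
    rw [Finset.mem_filter, abs_le, not_and_or, not_le, not_le] at ha
    rw [Finset.mem_union, Finset.mem_filter, Finset.mem_filter]
    rcases ha.2 with h' | h'
    · right; exact ⟨ha.1, by linarith⟩
    · left; exact ⟨ha.1, by linarith⟩
  have := (Finset.card_le_card hsub).trans (Finset.card_union_le _ _)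
  have : ((A.filter fun a => ¬ |dg a - d * N| ≤ ε * N).card : ℝ) ≤
      ((A.filter fun a => d * N + ε * N < dg a).card : ℝ) +
      ((A.filter fun a => dg a < d * N - ε * N).card : ℝ) := by exact_mod_cast this
  linarith

lemma near_const {α : Type} (S : Finset α) (P : α → Prop) [DecidablePred P] (f : α → ℝ) (c : ℝ)
    (hc : 0 ≤ c ∧ c ≤ 1) (hf : ∀ x ∈ S, 0 ≤ f x ∧ f x ≤ 1) (hP : ∀ x ∈ S, ¬ P x → f x = c) :
    |∑ x ∈ S, f x - c * S.card| ≤ ((S.filter P).card : ℝ) := by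
  have h1 : ∑ x ∈ S, f x - c * S.card = ∑ x ∈ S, (f x - c) := by
    rw [Finset.sum_sub_distrib, Finset.sum_const, nsmul_eq_mul, mul_comm]
  rw [h1, Finset.card_filter]
  push_cast
  refine (Finset.abs_sum_le_sum_abs _ _).trans (Finset.sum_le_sum fun x hx => ?_)
  split_ifs with h
  · have := hf x hx
    rw [abs_le]; constructor <;> linarith
  · simp [hP x hx h]

/-- ordered edge set -/
noncomputable def eSet {V : Type} [Fintype V] (G : SimpleGraph V) (X₁ X₂ : Finset V) :
    Finset (V × V) := univ.filter fun p => p.1 ∈ X₁ ∧ p.2 ∈ X₂ ∧ G.Adj p.1 p.2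

lemma eSet_rect_sum {V : Type} [Fintype V] (G : SimpleGraph V) (X₁ X₂ X Y : Finset V)
    (hX : X ⊆ X₁) (hY : Y ⊆ X₂) (F : V × V → ℝ) :
    ∑ p ∈ (eSet G X₁ X₂).filter (fun p => p.1 ∈ X ∧ p.2 ∈ Y), F p =
      ∑ u ∈ X, ∑ v ∈ Y.filter (fun v => G.Adj u v), F (u, v) := by
  rw [Finset.sum_sigma']
  refine Finset.sum_bij' (fun p _ => ⟨p.1, p.2⟩) (fun p _ => (p.1, p.2)) ?_ ?_ ?_ ?_ ?_
  · intro p hp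
    simp [eSet] at hp ⊢
    tauto
  · intro p hp
    simp [eSet] at hp ⊢
    exact ⟨⟨hX hp.1, hY hp.2.1, hp.2.2⟩, hp.1, hp.2.1⟩
  · intro p _; rfl
  · intro p _; rfl
  · intro p _; rfl

lemma eSet_star_left {V : Type} [Fintype V] (G : SimpleGraph V) (X₁ X₂ : Finset V)
    (hdis : Disjoint X₁ X₂) (v : V) (hv : v ∈ X₁) :
    (eSet G X₁ X₂).filter (fun p => p.1 = v ∨ p.2 = v) =
      (X₂.filter fun u => G.Adj v u).map ⟨fun u => (v, u), fun a b h => by simpa using h⟩ := by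
  ext ⟨a, b⟩
  have hv2 : v ∉ X₂ := fun h => (Finset.disjoint_left.1 hdis hv h)
  simp only [eSet, Finset.mem_filter, Finset.mem_univ, true_and, Finset.mem_map]
  constructor
  · rintro ⟨⟨h1, h2, h3⟩, rfl | rfl⟩
    · exact ⟨_, ⟨h2, h3⟩, rfl⟩
    · exact absurd h2 hv2
  · rintro ⟨x, ⟨h2, h3⟩, h4⟩
    have h5 : (v, x) = (a, b) := h4
    obtain ⟨rfl, rfl⟩ := Prod.mk.inj h5
    exact ⟨⟨hv, h2, h3⟩, Or.inl rfl⟩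

lemma eSet_star_right {V : Type} [Fintype V] (G : SimpleGraph V) (X₁ X₂ : Finset V)
    (hdis : Disjoint X₁ X₂) (v : V) (hv : v ∈ X₂) :
    (eSet G X₁ X₂).filter (fun p => p.1 = v ∨ p.2 = v) =
      (X₁.filter fun u => G.Adj v u).map ⟨fun u => (u, v), fun a b h => by simpa using h⟩ := by
  ext ⟨a, b⟩
  have hv2 : v ∉ X₁ := fun h => (Finset.disjoint_left.1 hdis h hv)
  simp only [eSet, Finset.mem_filter, Finset.mem_univ, true_and, Finset.mem_map]
  constructor
  · rintro ⟨⟨h1, h2, h3⟩, rfl | rfl⟩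
    · exact absurd h1 hv2
    · exact ⟨_, ⟨h1, h3.symm⟩, rfl⟩
  · rintro ⟨x, ⟨h2, h3⟩, h4⟩
    have h5 : (x, v) = (a, b) := h4
    obtain ⟨rfl, rfl⟩ := Prod.mk.inj h5
    exact ⟨⟨h2, hv, h3.symm⟩, Or.inr rfl⟩

set_option maxHeartbeats 1600000 in
lemma frac_weights {V : Type} [Fintype V] (G : SimpleGraph V) (X₁ X₂ : Finset V) (N : ℕ)
    (ε δ dbar : ℝ) (hN : 0 < N) (hε : 0 < ε) (hε1 : ε ≤ 1) (hδ : 0 < δ)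
    (hdis : Disjoint X₁ X₂) (huniv : X₁ ∪ X₂ = univ)
    (h : IsSuperRegularPair G X₁ X₂ ε δ N) (hd0 : 0 < dbar) (hd : dbar ≤ δ - 10 * ε) :
    ∃ w : V × V → ℝ, (∀ p, 0 ≤ w p ∧ w p ≤ 1) ∧ (∀ p, p ∉ eSet G X₁ X₂ → w p = 0) ∧
      ∑ p ∈ eSet G X₁ X₂, w p = dbar * (N : ℝ) ^ 2 ∧
      (∀ v, |∑ p ∈ (eSet G X₁ X₂).filter (fun p => p.1 = v ∨ p.2 = v), w p - dbar * N|
        ≤ 6 * ε * N) ∧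
      (∀ X ⊆ X₁, ∀ Y ⊆ X₂, ε * N ≤ X.card → ε * N ≤ Y.card →
        |∑ p ∈ (eSet G X₁ X₂).filter (fun p => p.1 ∈ X ∧ p.2 ∈ Y), w p
          - dbar * ((X.card : ℝ) * Y.card)| ≤
          2 * ε * N * (X.card + Y.card) + 4 * ε * ((X.card : ℝ) * Y.card)) := by
  obtain ⟨hreg, hc1, hc2, hm1, hm2⟩ := h
  have hNr : (0 : ℝ) < N := by exact_mod_cast hN
  set d := edgeDensityR G X₁ X₂ with hdd
  have hdens : ∑ a ∈ X₁, ((X₂.filter fun b => G.Adj a b).card : ℝ) = d * (N : ℝ) ^ 2 := by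
    rw [hdd]; unfold edgeDensityR; rw [hc1, hc2]; field_simp
  have hδd : δ ≤ d := by
    have h1 : ∑ a ∈ X₁, δ * (N : ℝ) ≤ d * (N : ℝ) ^ 2 := by
      rw [← hdens]; exact Finset.sum_le_sum hm1
    rw [Finset.sum_const, hc1, nsmul_eq_mul] at h1
    have : 0 < (N : ℝ) ^ 2 := by positivity
    by_contra hcon
    push Not at hcon
    nlinarith
  have hdpos : 0 < d := hδ.trans_le hδd
  -- neighbourhoods
  let Nb : V → Finset V := fun v => if v ∈ X₁ then X₂.filter (fun u => G.Adj v u)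
    else X₁.filter (fun u => G.Adj v u)
  have hside : ∀ v, v ∈ X₁ ∨ (v ∉ X₁ ∧ v ∈ X₂) := by
    intro v
    by_cases hv : v ∈ X₁
    · exact Or.inl hv
    · right
      have : v ∈ X₁ ∪ X₂ := by rw [huniv]; exact Finset.mem_univ v
      exact ⟨hv, (Finset.mem_union.1 this).resolve_left hv⟩
  have hNb1 : ∀ v ∈ X₁, Nb v = X₂.filter (fun u => G.Adj v u) := fun v hv => by simp [Nb, hv]
  have hNb2 : ∀ v ∈ X₂, Nb v = X₁.filter (fun u => G.Adj v u) := fun v hv => by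
    have : v ∉ X₁ := fun h => Finset.disjoint_left.1 hdis h hv
    simp [Nb, this]
  set dg : V → ℝ := fun v => ((Nb v).card : ℝ) with hdg
  have hdgδ : ∀ v, δ * N ≤ dg v := by
    intro v
    rcases hside v with hv | ⟨_, hv⟩
    · simp only [hdg, hNb1 v hv]; exact hm1 v hv
    · simp only [hdg, hNb2 v hv]; exact hm2 v hv
  have hdgpos : ∀ v, 0 < dg v := fun v => (mul_pos hδ hNr).trans_le (hdgδ v)
  obtain ⟨Bad, hBad⟩ : ∃ Bad : V → Prop, ∀ v, Bad v ↔ ¬ |dg v - d * N| ≤ ε * N :=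
    ⟨_, fun v => Iff.rfl⟩
  have hB1 : ((X₁.filter Bad).card : ℝ) ≤ 2 * ε * N := by
    have := bad_card G X₁ X₂ ε N hN hc1 hc2 hreg hε hε1
    convert this using 3
    refine Finset.filter_congr fun v hv => ?_
    simp only [hBad, hdg, hNb1 v hv, hdd]
  have hB2 : ((X₂.filter Bad).card : ℝ) ≤ 2 * ε * N := by
    have := bad_card G X₂ X₁ ε N hN hc2 hc1 hreg.symm' hε hε1
    convert this using 3
    refine Finset.filter_congr fun v hv => ?_
    simp only [hBad, hdg, hNb2 v hv, hdd, edgeDensityR_symm G X₁ X₂]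
  have hNbBad : ∀ v, (((Nb v).filter Bad).card : ℝ) ≤ 2 * ε * N := by
    intro v
    rcases hside v with hv | ⟨_, hv⟩
    · refine le_trans ?_ hB2
      rw [hNb1 v hv]
      exact_mod_cast Finset.card_le_card (Finset.filter_subset_filter _ (Finset.filter_subset _ _))
    · refine le_trans ?_ hB1
      rw [hNb2 v hv]
      exact_mod_cast Finset.card_le_card (Finset.filter_subset_filter _ (Finset.filter_subset _ _))
  -- the unnormalised weights
  obtain ⟨g, hgdef⟩ : ∃ g : V → V → ℝ, ∀ u v, g u v =
    if Bad u then (if Bad v then 0 else d * N / dg u) else (if Bad v then d * N / dg v else 1) :=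
    ⟨_, fun u v => rfl⟩
  have hgsymm : ∀ u v, g u v = g v u := by
    intro u v; simp only [hgdef]; split_ifs <;> rfl
  have hquot : ∀ v, 0 ≤ d * N / dg v ∧ d * N / dg v ≤ d / δ := by
    intro v
    refine ⟨by have := hdgpos v; positivity, ?_⟩
    rw [div_le_div_iff₀ (hdgpos v) hδ]
    nlinarith [hdgδ v]
  have hg : ∀ u v, 0 ≤ g u v ∧ g u v ≤ d / δ := by
    intro u v
    have h1 : 1 ≤ d / δ := by rw [le_div_iff₀ hδ]; linarith
    simp only [hgdef]
    split_ifs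
    · exact ⟨le_rfl, by linarith⟩
    · exact hquot u
    · exact hquot v
    · exact ⟨zero_le_one, h1⟩
  have hscale : ∀ p x : ℝ, 0 ≤ p → p ≤ δ / d → 0 ≤ x → x ≤ d / δ → 0 ≤ p * x ∧ p * x ≤ 1 := by
    intro p x h1 h2 h3 h4
    refine ⟨mul_nonneg h1 h3, ?_⟩
    calc p * x ≤ (δ / d) * (d / δ) := mul_le_mul h2 h4 h3 (by positivity)
      _ = 1 := by field_simp
  have hp1 : ∀ p : ℝ, p ≤ δ / d → p ≤ 1 := fun p hp => hp.trans (by rw [div_le_one hdpos]; exact hδd)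
  have hrow : ∀ p : ℝ, 0 ≤ p → p ≤ δ / d → ∀ v,
      |∑ u ∈ Nb v, p * g v u - p * d * N| ≤ 3 * ε * N := by
    intro p hp0 hp v
    by_cases hv : Bad v
    · have h1 := near_const (Nb v) Bad (fun u => p * g v u) (p * (d * N / dg v))
        (hscale p _ hp0 hp (hquot v).1 (hquot v).2)
        (fun u _ => hscale p _ hp0 hp (hg v u).1 (hg v u).2)
        (fun u _ hu => by simp only [hgdef, if_pos hv, if_neg hu])
      have h2 : p * (d * N / dg v) * (Nb v).card = p * d * N := by
        have := hdgpos v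
        change p * (d * N / dg v) * dg v = _
        field_simp
      rw [h2] at h1
      have := hNbBad v
      nlinarith [mul_pos hε hNr]
    · have h1 := near_const (Nb v) Bad (fun u => p * g v u) p
        ⟨hp0, hp1 p hp⟩
        (fun u _ => hscale p _ hp0 hp (hg v u).1 (hg v u).2)
        (fun u _ hu => by simp only [hgdef, if_neg hv, if_neg hu, mul_one])
      have h2 : |p * (Nb v).card - p * d * N| ≤ ε * N := by
        have h3 : |dg v - d * N| ≤ ε * N := not_not.1 (fun h' => hv ((hBad v).2 h'))
        rw [show p * ((Nb v).card : ℝ) - p * d * N = p * (dg v - d * N) by simp only [hdg]; ring,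
          abs_mul, abs_of_nonneg hp0]
        have := abs_nonneg (dg v - d * N)
        nlinarith [hp1 p hp]
      have h4 := abs_sub_le (∑ u ∈ Nb v, p * g v u) (p * (Nb v).card) (p * d * N)
      have := hNbBad v
      linarith
  -- total weight
  set W := ∑ q ∈ eSet G X₁ X₂, g q.1 q.2 with hW
  have hWsum : W = ∑ u ∈ X₁, ∑ v ∈ Nb u, g u v := by
    have := eSet_rect_sum G X₁ X₂ X₁ X₂ subset_rfl subset_rfl (fun q => g q.1 q.2)
    rw [Finset.filter_true_of_mem (fun q hq => by
      simp only [eSet, Finset.mem_filter] at hq; exact ⟨hq.2.1, hq.2.2.1⟩)] at this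
    rw [hW, this]
    exact Finset.sum_congr rfl fun u hu => by rw [hNb1 u hu]
  have htot : ∀ p : ℝ, 0 ≤ p → p ≤ δ / d → |p * W - p * d * (N : ℝ) ^ 2| ≤ 3 * ε * (N : ℝ) ^ 2 := by
    intro p hp0 hp
    have h1 : p * W - p * d * (N : ℝ) ^ 2 = ∑ u ∈ X₁, (∑ v ∈ Nb u, p * g u v - p * d * N) := by
      rw [Finset.sum_sub_distrib, Finset.sum_const, hc1, hWsum, Finset.mul_sum, nsmul_eq_mul]
      simp only [Finset.mul_sum]
      ring
    rw [h1]
    refine (Finset.abs_sum_le_sum_abs _ _).trans ?_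
    refine (Finset.sum_le_sum fun u _ => hrow p hp0 hp u).trans ?_
    rw [Finset.sum_const, hc1, nsmul_eq_mul]
    apply le_of_eq; ring
  have hN2 : 0 < (N : ℝ) ^ 2 := by positivity
  have hp0W : dbar * (N : ℝ) ^ 2 ≤ δ / d * W := by
    have h1 := (abs_le.1 (htot (δ / d) (by positivity) le_rfl)).1
    rw [div_mul_cancel₀ _ hdpos.ne'] at h1
    nlinarith
  have hWpos : 0 < W := by
    have h1 : 0 < δ / d * W := lt_of_lt_of_le (by positivity) hp0W
    exact pos_of_mul_pos_right h1 (by positivity)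
  set p := dbar * (N : ℝ) ^ 2 / W with hp
  have hpnn : 0 ≤ p := by positivity
  have hple : p ≤ δ / d := by rw [hp, div_le_iff₀ hWpos]; exact hp0W
  have hpW : p * W = dbar * (N : ℝ) ^ 2 := div_mul_cancel₀ _ hWpos.ne'
  clear_value p W
  have hpd : |dbar - p * d| ≤ 3 * ε := by
    have h1 := htot p hpnn hple
    rw [hpW, show dbar * (N : ℝ) ^ 2 - p * d * (N : ℝ) ^ 2 = (dbar - p * d) * (N : ℝ) ^ 2 by ring,
      abs_mul, abs_of_pos hN2] at h1
    exact le_of_mul_le_mul_right h1 hN2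
  have hwE : ∀ S : Finset (V × V), S ⊆ eSet G X₁ X₂ →
      ∑ q ∈ S, (if q ∈ eSet G X₁ X₂ then p * g q.1 q.2 else 0) = ∑ q ∈ S, p * g q.1 q.2 :=
    fun S hS => Finset.sum_congr rfl fun q hq => if_pos (hS hq)
  refine ⟨fun q => if q ∈ eSet G X₁ X₂ then p * g q.1 q.2 else 0, ?_, ?_, ?_, ?_, ?_⟩
  · intro q
    dsimp only
    split_ifs
    · exact hscale p _ hpnn hple (hg _ _).1 (hg _ _).2
    · exact ⟨le_rfl, zero_le_one⟩
  · intro q hq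
    exact if_neg hq
  · rw [hwE _ subset_rfl, ← Finset.mul_sum, ← hW]; exact hpW
  · intro v
    rw [hwE _ (Finset.filter_subset _ _)]
    have h1 : ∑ q ∈ (eSet G X₁ X₂).filter (fun p => p.1 = v ∨ p.2 = v), p * g q.1 q.2 =
        ∑ u ∈ Nb v, p * g v u := by
      rcases hside v with hv | ⟨_, hv⟩
      · rw [eSet_star_left G X₁ X₂ hdis v hv, Finset.sum_map, hNb1 v hv]
        rfl
      · rw [eSet_star_right G X₁ X₂ hdis v hv, Finset.sum_map, hNb2 v hv]
        refine Finset.sum_congr rfl fun u _ => ?_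
        rw [hgsymm v u]; rfl
    rw [h1]
    have h2 := hrow p hpnn hple v
    have h3 : |p * d * N - dbar * N| ≤ 3 * ε * N := by
      rw [← sub_mul, abs_mul, abs_of_pos hNr, abs_sub_comm]
      exact mul_le_mul_of_nonneg_right hpd hNr.le
    have := abs_sub_le (∑ u ∈ Nb v, p * g v u) (p * d * N) (dbar * N)
    linarith
  · intro X hX Y hY hXc hYc
    rw [hwE _ (Finset.filter_subset _ _)]
    set R := (eSet G X₁ X₂).filter (fun p => p.1 ∈ X ∧ p.2 ∈ Y) with hR
    have hXpos : (0 : ℝ) < X.card := (mul_pos hε hNr).trans_le hXc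
    have hYpos : (0 : ℝ) < Y.card := (mul_pos hε hNr).trans_le hYc
    have hXY : (0 : ℝ) < (X.card : ℝ) * Y.card := mul_pos hXpos hYpos
    have h1 := near_const R (fun q => Bad q.1 ∨ Bad q.2) (fun q => p * g q.1 q.2) p
        ⟨hpnn, hp1 p hple⟩
        (fun u _ => hscale p _ hpnn hple (hg _ _).1 (hg _ _).2)
        (fun u _ hu => by
          change p * g u.1 u.2 = p
          rw [hgdef, if_neg (fun h' => hu (Or.inl h')), if_neg (fun h' => hu (Or.inr h')),
            mul_one])
    have h2 : ((R.filter (fun q => Bad q.1 ∨ Bad q.2)).card : ℝ) ≤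
        2 * ε * N * (X.card + Y.card) := by
      have hsub : R.filter (fun q => Bad q.1 ∨ Bad q.2) ⊆
          ((X₁.filter Bad) ×ˢ Y) ∪ (X ×ˢ (X₂.filter Bad)) := by
        intro q hq
        simp only [hR, eSet, Finset.mem_filter, Finset.mem_union, Finset.mem_product] at hq ⊢
        tauto
      have h3 := (Finset.card_le_card hsub).trans (Finset.card_union_le _ _)
      rw [Finset.card_product, Finset.card_product] at h3
      have h4 : ((R.filter (fun q => Bad q.1 ∨ Bad q.2)).card : ℝ) ≤
        ((X₁.filter Bad).card : ℝ) * Y.card + X.card * ((X₂.filter Bad).card : ℝ) := by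
        exact_mod_cast h3
      have h5 := mul_le_mul_of_nonneg_right hB1 hYpos.le
      have h6 := mul_le_mul_of_nonneg_left hB2 hXpos.le
      linarith
    have h3 : |(R.card : ℝ) - d * ((X.card : ℝ) * Y.card)| ≤ ε * ((X.card : ℝ) * Y.card) := by
      have h4 := hreg X hX Y hY (by rw [hc1]; exact hXc) (by rw [hc2]; exact hYc)
      have h5 : (R.card : ℝ) = edgeDensityR G X Y * ((X.card : ℝ) * Y.card) := by
        have := eSet_rect_sum G X₁ X₂ X Y hX hY (fun _ => 1)
        simp only [Finset.sum_const, nsmul_eq_mul, mul_one] at this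
        rw [hR, this]
        unfold edgeDensityR
        rw [div_mul_cancel₀ _ hXY.ne']
      rw [h5, ← sub_mul, abs_mul, abs_of_pos hXY]
      exact mul_le_mul_of_nonneg_right h4 hXY.le
    have h4 : |p * R.card - p * d * ((X.card : ℝ) * Y.card)| ≤ ε * ((X.card : ℝ) * Y.card) := by
      rw [show p * (R.card : ℝ) - p * d * ((X.card : ℝ) * Y.card) =
        p * (R.card - d * ((X.card : ℝ) * Y.card)) by ring, abs_mul, abs_of_nonneg hpnn]
      have := abs_nonneg ((R.card : ℝ) - d * ((X.card : ℝ) * Y.card))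
      nlinarith [hp1 p hple]
    have h5 : |p * d * ((X.card : ℝ) * Y.card) - dbar * ((X.card : ℝ) * Y.card)| ≤
        3 * ε * ((X.card : ℝ) * Y.card) := by
      rw [← sub_mul, abs_mul, abs_of_pos hXY, abs_sub_comm]
      exact mul_le_mul_of_nonneg_right hpd hXY.le
    have h6 := abs_sub_le (∑ q ∈ R, p * g q.1 q.2) (p * R.card) (dbar * ((X.card : ℝ) * Y.card))
    have h7 := abs_sub_le (p * R.card) (p * d * ((X.card : ℝ) * Y.card))
      (dbar * ((X.card : ℝ) * Y.card))
    linarith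

set_option maxHeartbeats 1600000 in
theorem super_regular_subgraph_exact_density :
    ∃ C C' : ℝ, 0 < C ∧ 0 < C' ∧
      ∀ ε δ : ℝ, 0 < ε → 0 < δ →
        ∃ N₀ : ℕ, ∀ N : ℕ, N₀ ≤ N →
          ∀ (V : Type) [Fintype V] (G : SimpleGraph V) (X₁ X₂ : Finset V),
            Disjoint X₁ X₂ → X₁ ∪ X₂ = univ →
            (∀ u v : V, G.Adj u v → (u ∈ X₁ ∧ v ∈ X₂) ∨ (u ∈ X₂ ∧ v ∈ X₁)) →
            IsSuperRegularPair G X₁ X₂ ε δ N →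
            ∀ dbar : ℝ, 0 < dbar → dbar ≤ δ - C * ε →
              (∃ z : ℕ, dbar * (N : ℝ) ^ 2 = (z : ℝ)) →
              ∃ G' : SimpleGraph V, G' ≤ G ∧
                edgeDensityR G' X₁ X₂ = dbar ∧
                IsEpsSuperRegularPair G' X₁ X₂ (C' * Real.sqrt ε) N := by
  refine ⟨10, 10, by norm_num, by norm_num, fun ε δ hε hδ => ?_⟩
  obtain ⟨N₀, hN₀⟩ := numeric (ε ^ 2) (by positivity)
  refine ⟨N₀, fun N hNN V _ G X₁ X₂ hdis huniv _ hsr dbar hd0 hd hz => ?_⟩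
  obtain ⟨hN, hnum⟩ := hN₀ N hNN
  obtain ⟨z, hz⟩ := hz
  have hNr : (0 : ℝ) < N := by exact_mod_cast hN
  have hc1 := hsr.2.1
  have hc2 := hsr.2.2.1
  have hδ1 : δ ≤ 1 := by
    obtain ⟨v, hv⟩ : X₁.Nonempty := by rw [← Finset.card_pos, hc1]; exact hN
    have h1 := hsr.2.2.2.1 v hv
    have h2 : ((X₂.filter fun b => G.Adj v b).card : ℝ) ≤ N := by
      rw [← hc2]; exact_mod_cast Finset.card_filter_le _ _
    by_contra hcon
    push Not at hcon
    nlinarith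
  have hε10 : ε ≤ 1 / 10 := by linarith
  obtain ⟨w, hw, hwE, hwz, hstar, hrect⟩ := frac_weights G X₁ X₂ N ε δ dbar hN hε (by linarith) hδ
    hdis huniv hsr hd0 hd
  set E := eSet G X₁ X₂ with hE
  let S : V ⊕ (Finset V × Finset V) → Finset (V × V) := fun i => match i with
    | Sum.inl v => E.filter (fun p => p.1 = v ∨ p.2 = v)
    | Sum.inr XY => E.filter (fun p => p.1 ∈ XY.1 ∧ p.2 ∈ XY.2)
  let m : V ⊕ (Finset V × Finset V) → ℝ := fun i => match i with
    | Sum.inl _ => N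
    | Sum.inr _ => (N : ℝ) ^ 2
  have hcardV : Fintype.card V = 2 * N := by
    rw [← Finset.card_univ, ← huniv, Finset.card_union_of_disjoint hdis, hc1, hc2]; ring
  obtain ⟨T, hTE, hTc, hT⟩ := rounding E z S w hw hwE (hwz.trans hz) (ε ^ 2 / 2) (by positivity)
    (by nlinarith) (fun i => ε ^ 2 * m i) m
    (by
      rintro (v | ⟨X, Y⟩)
      · have := (abs_le.1 (hstar v)).2
        change ∑ x ∈ E.filter (fun p => p.1 = v ∨ p.2 = v), w x ≤ N
        nlinarith
      · change ∑ x ∈ E.filter (fun p => p.1 ∈ X ∧ p.2 ∈ Y), w x ≤ (N : ℝ) ^ 2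
        have h1 : ∑ x ∈ E.filter (fun p => p.1 ∈ X ∧ p.2 ∈ Y), w x ≤ ∑ x ∈ E, w x :=
          Finset.sum_le_sum_of_subset_of_nonneg (Finset.filter_subset _ _) fun x _ _ => (hw x).1
        rw [hwz] at h1
        have : 0 < (N : ℝ) ^ 2 := by positivity
        nlinarith)
    (by
      rw [Fintype.sum_sum_type]
      simp only [m, Finset.sum_const, Finset.card_univ, Fintype.card_prod, Fintype.card_finset,
        hcardV, nsmul_eq_mul]
      convert hnum using 3
      · push_cast; ring
      · push_cast
        rw [pow_mul, ← mul_pow]; norm_num)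
  have hTmem : ∀ a b, (a, b) ∈ T → a ∈ X₁ ∧ b ∈ X₂ ∧ G.Adj a b := by
    intro a b hab
    have := hTE hab
    simpa [hE, eSet] using this
  obtain ⟨G', hG'⟩ : ∃ G' : SimpleGraph V, ∀ a b, G'.Adj a b ↔ ((a, b) ∈ T ∨ (b, a) ∈ T) :=
    ⟨{ Adj := fun a b => (a, b) ∈ T ∨ (b, a) ∈ T
       symm := ⟨fun a b h => h.symm⟩
       loopless := ⟨fun a h => by
         rcases h with h | h <;> exact G.loopless.irrefl a (hTmem a a h).2.2⟩ },
      fun a b => Iff.rfl⟩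
  have hn12 : ∀ v, v ∈ X₁ → v ∉ X₂ := fun v h h' => Finset.disjoint_left.1 hdis h h'
  have hAdj : ∀ a ∈ X₁, ∀ b, G'.Adj a b ↔ (a, b) ∈ T := by
    intro a ha b
    rw [hG']
    exact ⟨fun h => h.resolve_right fun h' => hn12 a ha (hTmem _ _ h').2.1, Or.inl⟩
  have hET : eSet G' X₁ X₂ = T := by
    ext ⟨a, b⟩
    simp only [eSet, Finset.mem_filter, Finset.mem_univ, true_and]
    constructor
    · rintro ⟨h1, h2, h3⟩
      exact (hAdj a h1 b).1 h3
    · intro h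
      have := hTmem a b h
      exact ⟨this.1, this.2.1, (hG' a b).2 (Or.inl h)⟩
  have hcount : ∀ X ⊆ X₁, ∀ Y ⊆ X₂, ∑ a ∈ X, ((Y.filter fun b => G'.Adj a b).card : ℝ) =
      ((T.filter fun p => p.1 ∈ X ∧ p.2 ∈ Y).card : ℝ) := by
    intro X hX Y hY
    have := eSet_rect_sum G' X₁ X₂ X Y hX hY (fun _ => 1)
    simp only [Finset.sum_const, nsmul_eq_mul, mul_one, hET] at this
    exact this.symm
  have hdens : edgeDensityR G' X₁ X₂ = dbar := by
    unfold edgeDensityR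
    rw [hcount X₁ subset_rfl X₂ subset_rfl, Finset.filter_true_of_mem (fun q hq =>
      ⟨(hTmem q.1 q.2 hq).1, (hTmem q.1 q.2 hq).2.1⟩), hTc, ← hz, hc1, hc2]
    field_simp
  have hs0 : 0 < Real.sqrt ε := Real.sqrt_pos.2 hε
  have hss : Real.sqrt ε * Real.sqrt ε = ε := Real.mul_self_sqrt hε.le
  have hs1 : Real.sqrt ε ≤ 1 := by nlinarith
  have hsε : ε ≤ Real.sqrt ε := by nlinarith
  have hdegT : ∀ v, |((T.filter fun p => p.1 = v ∨ p.2 = v).card : ℝ) - dbar * N| ≤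
      10 * Real.sqrt ε * N := by
    intro v
    have h1 := hT (Sum.inl v) (T.filter fun p => p.1 = v ∨ p.2 = v) (fun x => by
      simp only [S, Finset.mem_filter]
      exact ⟨fun h => ⟨⟨hTE h.1, h.2⟩, h.1⟩, fun h => ⟨h.2, h.1.2⟩⟩)
    simp only [S, m] at h1
    have h2 := hstar v
    have h3 := abs_sub_le ((T.filter fun p => p.1 = v ∨ p.2 = v).card : ℝ)
      (∑ p ∈ E.filter (fun p => p.1 = v ∨ p.2 = v), w p) (dbar * N)
    have h4 : ε ^ 2 * N ≤ Real.sqrt ε * N := by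
      apply mul_le_mul_of_nonneg_right _ hNr.le
      nlinarith
    have h5 : ε * N ≤ Real.sqrt ε * N := mul_le_mul_of_nonneg_right hsε hNr.le
    have h6 : 0 ≤ Real.sqrt ε * N := by positivity
    linarith
  refine ⟨G', ?_, hdens, ?_, hc1, hc2, ?_, ?_⟩
  · intro a b h
    rcases (hG' a b).1 h with h | h
    · exact (hTmem _ _ h).2.2
    · exact (hTmem _ _ h).2.2.symm
  · intro X hX Y hY hXc hYc
    rw [hdens]
    rw [hc1] at hXc
    rw [hc2] at hYc
    have hXpos : (0 : ℝ) < X.card := lt_of_lt_of_le (by positivity) hXc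
    have hYpos : (0 : ℝ) < Y.card := lt_of_lt_of_le (by positivity) hYc
    have hXY : (0 : ℝ) < (X.card : ℝ) * Y.card := by positivity
    have h1 := hT (Sum.inr (X, Y)) (T.filter fun p => p.1 ∈ X ∧ p.2 ∈ Y) (fun x => by
      simp only [S, Finset.mem_filter]
      exact ⟨fun h => ⟨⟨hTE h.1, h.2⟩, h.1⟩, fun h => ⟨h.2, h.1.2⟩⟩)
    simp only [S, m] at h1
    have hεs : ε * N ≤ 10 * Real.sqrt ε * N := by
      apply mul_le_mul_of_nonneg_right _ hNr.le
      linarith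
    have h2 := hrect X hX Y hY (hεs.trans hXc) (hεs.trans hYc)
    have h3 := abs_sub_le ((T.filter fun p => p.1 ∈ X ∧ p.2 ∈ Y).card : ℝ)
      (∑ p ∈ E.filter (fun p => p.1 ∈ X ∧ p.2 ∈ Y), w p) (dbar * ((X.card : ℝ) * Y.card))
    have h4 : |((T.filter fun p => p.1 ∈ X ∧ p.2 ∈ Y).card : ℝ) - dbar * ((X.card : ℝ) * Y.card)| ≤
        10 * Real.sqrt ε * ((X.card : ℝ) * Y.card) := by
      have a1 : ε * N * X.card ≤ Real.sqrt ε / 10 * ((X.card : ℝ) * Y.card) := by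
        have := mul_le_mul_of_nonneg_left hYc (mul_pos hs0 hXpos).le
        have e : Real.sqrt ε * X.card * (10 * Real.sqrt ε * N) = 10 * (ε * N * X.card) := by
          linear_combination 10 * (N : ℝ) * X.card * hss
        linarith
      have a2 : ε * N * Y.card ≤ Real.sqrt ε / 10 * ((X.card : ℝ) * Y.card) := by
        have := mul_le_mul_of_nonneg_left hXc (mul_pos hs0 hYpos).le
        have e : Real.sqrt ε * Y.card * (10 * Real.sqrt ε * N) = 10 * (ε * N * Y.card) := by
          linear_combination 10 * (N : ℝ) * Y.card * hss
        linarith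
      have a3 : ε ^ 2 * (N : ℝ) ^ 2 ≤ ε * ((X.card : ℝ) * Y.card) := by
        have b1 : 10 * Real.sqrt ε * N * (10 * Real.sqrt ε * N) ≤ (X.card : ℝ) * Y.card :=
          mul_le_mul hXc hYc (by positivity) hXpos.le
        have b2 : 10 * Real.sqrt ε * N * (10 * Real.sqrt ε * N) = 100 * ε * (N : ℝ) ^ 2 := by
          linear_combination 100 * (N : ℝ) ^ 2 * hss
        rw [b2] at b1
        have b3 := mul_le_mul_of_nonneg_left b1 hε.le
        have : 0 ≤ ε ^ 2 * (N : ℝ) ^ 2 := by positivity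
        nlinarith
      have a4 : ε * ((X.card : ℝ) * Y.card) ≤ Real.sqrt ε * ((X.card : ℝ) * Y.card) :=
        mul_le_mul_of_nonneg_right hsε hXY.le
      have a5 : 0 ≤ Real.sqrt ε * ((X.card : ℝ) * Y.card) := by positivity
      linarith
    unfold edgeDensityR
    rw [hcount X hX Y hY]
    rw [← div_le_div_iff_of_pos_right hXY, mul_div_assoc, div_self hXY.ne', mul_one] at h4
    refine le_trans (le_of_eq ?_) h4
    rw [← abs_of_pos hXY, ← abs_div, abs_of_pos hXY, sub_div, mul_div_assoc, div_self hXY.ne',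
      mul_one]
  · intro v hv
    have h1 : ((X₂.filter fun b => G'.Adj v b).card : ℝ) =
        ((T.filter fun p => p.1 = v ∨ p.2 = v).card : ℝ) := by
      rw [← hET, eSet_star_left G' X₁ X₂ hdis v hv, Finset.card_map]
    have h2 := abs_le.1 (hdegT v)
    rw [hdens, h1]
    constructor <;> linarith [h2.1, h2.2]
  · intro v hv
    have h1 : ((X₁.filter fun b => G'.Adj v b).card : ℝ) =
        ((T.filter fun p => p.1 = v ∨ p.2 = v).card : ℝ) := by
      rw [← hET, eSet_star_right G' X₁ X₂ hdis v hv, Finset.card_map]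
    have h2 := abs_le.1 (hdegT v)
    rw [hdens, h1]
    constructor <;> linarith [h2.1, h2.2]
end

section
/- For every d₀ > 0 there exist ε > 0 and a constant C = C(d₀) such that the following holds. Let G be an ε-super-regular bipartite graph with parts of size m and density d ≥ d₀. Then there exists a (C/m)-spread probability distribution μ over the perfect matchings of G. -/
open Finset
open scoped Classical

/-- Counting functions with restricted values on a set of coordinates. -/
lemma card_restrict_le {ι V : Type} [Fintype ι] [DecidableEq ι] [DecidableEq V]
    (t u : ι → Finset V) (I : Finset ι) (r : ℝ)
    (h : ∀ i ∈ I, ((t i ∩ u i).card : ℝ) ≤ r * (t i).card) :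
    (((Fintype.piFinset t).filter fun f => ∀ i ∈ I, f i ∈ u i).card : ℝ)
      ≤ r ^ I.card * (Fintype.piFinset t).card := by
  have hsub : ((Fintype.piFinset t).filter fun f => ∀ i ∈ I, f i ∈ u i) ⊆
      Fintype.piFinset (fun i => if i ∈ I then t i ∩ u i else t i) := by
    intro f hf
    simp only [Finset.mem_filter, Fintype.mem_piFinset] at hf ⊢
    intro i
    split_ifs with hi
    · exact Finset.mem_inter.2 ⟨hf.1 i, hf.2 i hi⟩
    · exact hf.1 i
  have h1 : (((Fintype.piFinset t).filter fun f => ∀ i ∈ I, f i ∈ u i).card : ℝ) ≤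
      ∏ i, ((if i ∈ I then t i ∩ u i else t i).card : ℝ) := by
    have := Finset.card_le_card hsub
    rw [Fintype.card_piFinset] at this
    exact_mod_cast this
  refine h1.trans ?_
  rw [Fintype.card_piFinset]
  push_cast
  have h2 : r ^ I.card = ∏ i : ι, (if i ∈ I then r else 1) := by
    rw [Finset.prod_ite_mem]; simp
  rw [h2, ← Finset.prod_mul_distrib]
  apply Finset.prod_le_prod
  · intro i _; positivity
  · intro i _
    split_ifs with hi
    · exact h i hi
    · simp

/-- The Hall-violating event for the picks on one side. -/
def BadPick {V : Type} (K : ℕ) (A B : Finset V) (f : V × Fin K → V) : Prop :=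
  ∃ S ⊆ A, ∃ W ⊆ B, 2 * S.card ≤ A.card + 1 ∧ W.card + 1 = S.card ∧
    ∀ a ∈ S, ∀ j, f (a, j) ∈ W

lemma choose_bound (m s : ℕ) (hs : 1 ≤ s) :
    (m.choose s : ℝ) ≤ (3 * m / s) ^ s := by
  have h1 : (m.choose s : ℝ) ≤ (m : ℝ) ^ s / (s.factorial : ℝ) := Nat.choose_le_pow_div s m
  have h2 := Real.pow_div_factorial_le_exp (x := (s : ℝ)) (by positivity) s
  have h3 : Real.exp s ≤ 3 ^ s := by
    rw [← Real.exp_one_pow]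
    exact pow_le_pow_left₀ (Real.exp_pos _).le (by linarith [Real.exp_one_lt_d9]) _
  have hs0 : (0 : ℝ) < s := by exact_mod_cast hs
  have h4 : (s : ℝ) ^ s / (s.factorial : ℝ) ≤ 3 ^ s := h2.trans h3
  refine h1.trans ?_
  rw [div_pow, mul_pow, le_div_iff₀ (by positivity)]
  calc (m : ℝ) ^ s / (s.factorial : ℝ) * s ^ s = (s ^ s / (s.factorial : ℝ)) * m ^ s := by ring
    _ ≤ 3 ^ s * m ^ s := by gcongr

lemma choose_pred_bound (m s : ℕ) (hs : 1 ≤ s) (hsm : 2 * s ≤ m + 1) :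
    (m.choose (s - 1) : ℝ) ≤ (3 * m / s) ^ s := by
  refine le_trans ?_ (choose_bound m s hs)
  have : m.choose (s - 1) ≤ m.choose s := by
    obtain ⟨r, rfl⟩ : ∃ r, s = r + 1 := ⟨s - 1, by omega⟩
    have h := Nat.choose_succ_right_eq m r
    simp only [Nat.add_sub_cancel]
    by_contra hc
    push Not at hc
    have : m.choose (r+1) * (r+1) < m.choose r * (m - r) :=
      Nat.mul_lt_mul_of_lt_of_le hc (by omega) (by omega)
    omega
  exact_mod_cast this

lemma small_term (δ : ℝ) (hδ : 0 < δ) (m s K : ℕ) (hs : 1 ≤ s) (hsm : 2 * s ≤ m + 1)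
    (hK : 144 ≤ δ ^ 2 * 2 ^ K) (hsmall : (s : ℝ) ≤ δ * m / 2) :
    (m.choose s : ℝ) * (m.choose (s - 1)) * ((s : ℝ) / (δ * m)) ^ (s * (K + 2))
      ≤ (1 / 16) ^ s := by
  have hs0 : (0 : ℝ) < s := by exact_mod_cast hs
  have hm0 : (0 : ℝ) < m := by
    by_contra hc
    have : (m : ℝ) = 0 := le_antisymm (not_lt.1 hc) (by positivity)
    rw [this] at hsmall; linarith
  have hx : (s : ℝ) / (δ * m) ≤ 1 / 2 := by
    rw [div_le_iff₀ (by positivity)]; linarith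
  have hbase : (3 * (m : ℝ) / s) ^ 2 * ((s : ℝ) / (δ * m)) ^ (K + 2) ≤ 1 / 16 := by
    have e : (3 * (m : ℝ) / s) ^ 2 * ((s : ℝ) / (δ * m)) ^ (K + 2)
        = 9 / δ ^ 2 * ((s : ℝ) / (δ * m)) ^ K := by
      rw [pow_add]; field_simp; ring
    rw [e]
    calc 9 / δ ^ 2 * ((s : ℝ) / (δ * m)) ^ K ≤ 9 / δ ^ 2 * (1 / 2) ^ K := by gcongr
      _ = 9 / (δ ^ 2 * 2 ^ K) := by rw [one_div, inv_pow]; field_simp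
      _ ≤ 9 / 144 := by gcongr
      _ = 1 / 16 := by norm_num
  calc (m.choose s : ℝ) * (m.choose (s - 1)) * ((s : ℝ) / (δ * m)) ^ (s * (K + 2))
      ≤ (3 * m / s) ^ s * (3 * m / s) ^ s * ((s : ℝ) / (δ * m)) ^ (s * (K + 2)) := by
        gcongr
        · exact choose_bound m s hs
        · exact choose_pred_bound m s hs hsm
    _ = ((3 * (m : ℝ) / s) ^ 2 * ((s : ℝ) / (δ * m)) ^ (K + 2)) ^ s := by
        rw [mul_pow, ← pow_mul, ← pow_mul, mul_comm (K+2) s]; ring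
    _ ≤ (1 / 16) ^ s := by gcongr

lemma pair_bound {V : Type} [Fintype V] [DecidableEq V] (δ : ℝ) (hδ : 0 < δ) (hδ1 : δ ≤ 1)
    (K L m s : ℕ) (hL : (1 - δ / 2) ^ L ≤ 1 / 64) (hKL : 4 * (L : ℝ) ≤ K * δ)
    (A B : Finset V) (N : V → Finset V) (hB : B.card = m) (hm : 1 ≤ m)
    (hN : ∀ a ∈ A, N a ⊆ B) (hdeg : ∀ a ∈ A, δ * m ≤ (N a).card)
    (hreg : ∀ X ⊆ A, ∀ Y ⊆ B, δ / 4 * m ≤ X.card → δ / 4 * m ≤ Y.card →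
      δ * X.card * Y.card ≤ ∑ a ∈ X, ((N a ∩ Y).card : ℝ))
    (S W : Finset V) (hS : S ⊆ A) (hW : W ⊆ B) (hSs : S.card = s) (hWs : W.card + 1 = s)
    (hsm : 2 * s ≤ m + 1) :
    let Ω := Fintype.piFinset (fun p : V × Fin K => N p.1)
    ((Ω.filter fun f => ∀ a ∈ S, ∀ j, f (a, j) ∈ W).card : ℝ) ≤
      (if (s : ℝ) ≤ δ * m / 2 then ((s : ℝ) / (δ * m)) ^ (s * K) else (1 / 64) ^ m) * Ω.card := by
  intro Ω
  have hm0 : (0 : ℝ) < m := by exact_mod_cast hm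
  split_ifs with hc
  · have := card_restrict_le (fun p : V × Fin K => N p.1) (fun _ => W) (S ×ˢ Finset.univ)
      ((s : ℝ) / (δ * m)) ?_
    · rw [Finset.card_product, Finset.card_univ, Fintype.card_fin, hSs] at this
      refine le_trans ?_ this
      norm_cast
      apply Finset.card_le_card
      intro f hf
      simp only [Finset.mem_filter, Finset.mem_product, Prod.forall] at hf ⊢
      exact ⟨hf.1, fun a j h => hf.2 a h.1 j⟩
    · rintro ⟨a, j⟩ hi
      have ha := hS (Finset.mem_product.1 hi).1
      have h1 : ((N a ∩ W).card : ℝ) ≤ s := by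
        have := Finset.card_le_card (Finset.inter_subset_right (s₁ := N a) (s₂ := W))
        exact_mod_cast (by omega : (N a ∩ W).card ≤ s)
      have h2 := hdeg a ha
      calc ((N a ∩ W).card : ℝ) ≤ s := h1
        _ = s / (δ * m) * (δ * m) := by field_simp
        _ ≤ _ := by gcongr
  · push Not at hc
    set Y := B \ W with hY
    have hYc : Y.card = m - W.card := by
      rw [hY, Finset.card_sdiff_of_subset hW, hB]
    have hYm : (m : ℝ) / 2 ≤ Y.card := by
      have : m ≤ 2 * Y.card := by omega
      have : (m : ℝ) ≤ 2 * Y.card := by exact_mod_cast this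
      linarith
    set X := S.filter (fun a => ((N a ∩ Y).card : ℝ) < δ * Y.card) with hX
    have hXS : X ⊆ S := Finset.filter_subset _ _
    have hXc : (X.card : ℝ) < δ / 4 * m := by
      by_contra hcon
      push Not at hcon
      have h1 := hreg X (hXS.trans hS) Y Finset.sdiff_subset hcon (by nlinarith)
      have hne : X.Nonempty := by
        rw [← Finset.card_pos]
        have : (0 : ℝ) < X.card := lt_of_lt_of_le (by positivity) hcon
        exact_mod_cast this
      have h2 : ∑ a ∈ X, ((N a ∩ Y).card : ℝ) < ∑ a ∈ X, δ * Y.card :=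
        Finset.sum_lt_sum_of_nonempty hne (fun a ha => (Finset.mem_filter.1 ha).2)
      rw [Finset.sum_const, nsmul_eq_mul] at h2
      linarith
    have hq0 : 0 ≤ 1 - δ / 2 := by linarith
    have := card_restrict_le (fun p : V × Fin K => N p.1) (fun _ => W) ((S \ X) ×ˢ Finset.univ)
      (1 - δ / 2) ?_
    · rw [Finset.card_product, Finset.card_univ, Fintype.card_fin] at this
      have hcard : L * m ≤ (S \ X).card * K := by
        have e : ((S \ X).card : ℝ) = s - X.card := by
          rw [Finset.card_sdiff_of_subset hXS, Nat.cast_sub (Finset.card_le_card hXS), hSs]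
        have h1 : δ / 4 * m ≤ ((S \ X).card : ℝ) := by rw [e]; linarith
        have h2 : (L * m : ℝ) ≤ (S \ X).card * K := by
          calc (L * m : ℝ) = (4 * L) * (m / 4) := by ring
            _ ≤ (K * δ) * (m / 4) := by gcongr
            _ = (δ / 4 * m) * K := by ring
            _ ≤ _ := by gcongr
        exact_mod_cast h2
      have hp : (1 - δ / 2) ^ ((S \ X).card * K) ≤ (1 / 64) ^ m := by
        calc (1 - δ / 2) ^ ((S \ X).card * K) ≤ (1 - δ / 2) ^ (L * m) :=
              pow_le_pow_of_le_one hq0 (by linarith) hcard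
          _ = ((1 - δ / 2) ^ L) ^ m := by rw [pow_mul]
          _ ≤ _ := by gcongr
      calc _ ≤ _ := ?_
        _ ≤ _ := this
        _ ≤ _ := by gcongr
      norm_cast
      apply Finset.card_le_card
      intro f hf
      simp only [Finset.mem_filter, Finset.mem_product, Prod.forall] at hf ⊢
      exact ⟨hf.1, fun a j h => hf.2 a (Finset.mem_sdiff.1 h.1).1 j⟩
    · rintro ⟨a, j⟩ hi
      have ha' := Finset.mem_sdiff.1 (Finset.mem_product.1 hi).1
      have ha := hS ha'.1
      have h1 : δ * Y.card ≤ ((N a ∩ Y).card : ℝ) := by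
        by_contra hcon
        push Not at hcon
        exact ha'.2 (Finset.mem_filter.2 ⟨ha'.1, hcon⟩)
      have h2 : (N a ∩ W).card + (N a ∩ Y).card = (N a).card := by
        rw [← Finset.card_union_of_disjoint]
        · congr 1
          rw [← Finset.inter_union_distrib_left, hY, Finset.union_sdiff_of_subset hW]
          exact Finset.inter_eq_left.2 (hN a ha)
        · rw [Finset.disjoint_left]
          intro x hx hx'
          exact (Finset.mem_sdiff.1 (Finset.mem_inter.1 hx').2).2 (Finset.mem_inter.1 hx).2
      have h2' : ((N a ∩ W).card : ℝ) + (N a ∩ Y).card = (N a).card := by exact_mod_cast h2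
      have h3 : ((N a).card : ℝ) ≤ m := by
        have := Finset.card_le_card (hN a ha)
        rw [hB] at this
        exact_mod_cast this
      show ((N a ∩ W).card : ℝ) ≤ (1 - δ / 2) * (N a).card
      nlinarith

lemma bad_count {V : Type} [Fintype V] [DecidableEq V] (δ : ℝ) (hδ : 0 < δ) (hδ1 : δ ≤ 1)
    (K L m : ℕ) (hK : 144 ≤ δ ^ 2 * 2 ^ K)
    (hL : (1 - δ / 2) ^ L ≤ 1 / 64) (hKL : 4 * (L : ℝ) ≤ (K + 2 : ℕ) * δ)
    (A B : Finset V) (N : V → Finset V) (hA : A.card = m) (hB : B.card = m) (hm : 1 ≤ m)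
    (hN : ∀ a ∈ A, N a ⊆ B) (hdeg : ∀ a ∈ A, δ * m ≤ (N a).card)
    (hreg : ∀ X ⊆ A, ∀ Y ⊆ B, δ / 4 * m ≤ X.card → δ / 4 * m ≤ Y.card →
      δ * X.card * Y.card ≤ ∑ a ∈ X, ((N a ∩ Y).card : ℝ)) :
    let Ω := Fintype.piFinset (fun p : V × Fin (K + 2) => N p.1)
    ((Ω.filter fun f => BadPick (K + 2) A B f).card : ℝ) ≤ 1 / 4 * Ω.card := by
  intro Ω
  have hsub : (Ω.filter fun f => BadPick (K + 2) A B f) ⊆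
      (Finset.range m).biUnion fun r => (A.powersetCard (r + 1) ×ˢ B.powersetCard r).biUnion
        fun q => if 2 * (r + 1) ≤ m + 1 then
          Ω.filter fun f => ∀ a ∈ q.1, ∀ j, f (a, j) ∈ q.2 else ∅ := by
    intro f hf
    obtain ⟨hfΩ, S, hS, W, hW, h1, h2, h3⟩ := Finset.mem_filter.1 hf
    have hSA := Finset.card_le_card hS
    simp only [Finset.mem_biUnion, Finset.mem_range, Finset.mem_product, Finset.mem_powersetCard]
    refine ⟨W.card, by omega, (S, W), ⟨⟨hS, h2.symm⟩, hW, rfl⟩, ?_⟩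
    rw [if_pos (by omega)]
    exact Finset.mem_filter.2 ⟨hfΩ, h3⟩
  have hterm : ∀ r ∈ Finset.range m, ((((A.powersetCard (r + 1) ×ˢ B.powersetCard r).biUnion
        fun q => if 2 * (r + 1) ≤ m + 1 then
          Ω.filter fun f => ∀ a ∈ q.1, ∀ j, f (a, j) ∈ q.2 else ∅).card : ℕ) : ℝ)
        ≤ (1 / 16) ^ (r + 1) * Ω.card := by
    intro r hr
    by_cases hrm : 2 * (r + 1) ≤ m + 1
    swap
    · simp only [if_neg hrm]
      have : ((A.powersetCard (r + 1) ×ˢ B.powersetCard r).biUnion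
        fun q => (∅ : Finset (V × Fin (K + 2) → V))) = ∅ := by ext; simp
      rw [this]; simp
    simp only [if_pos hrm]
    set c : ℝ := (if ((r + 1 : ℕ) : ℝ) ≤ δ * m / 2 then
      (((r + 1 : ℕ) : ℝ) / (δ * m)) ^ ((r + 1) * (K + 2)) else (1 / 64) ^ m) with hc
    have hp : ∀ q ∈ A.powersetCard (r + 1) ×ˢ B.powersetCard r,
        ((Ω.filter fun f => ∀ a ∈ q.1, ∀ j, f (a, j) ∈ q.2).card : ℝ) ≤ c * Ω.card := by
      intro q hq
      obtain ⟨h1, h2⟩ := Finset.mem_product.1 hq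
      obtain ⟨h1, h1'⟩ := Finset.mem_powersetCard.1 h1
      obtain ⟨h2, h2'⟩ := Finset.mem_powersetCard.1 h2
      exact pair_bound δ hδ hδ1 (K + 2) L m (r + 1) hL hKL A B N hB hm hN hdeg hreg q.1 q.2
        h1 h2 h1' (by omega) hrm
    have hcc : (m.choose (r + 1) : ℝ) * (m.choose r) * c ≤ (1 / 16) ^ (r + 1) := by
      rw [hc]
      split_ifs with hsm
      · exact small_term δ hδ m (r + 1) K (by omega) hrm hK hsm
      · have a1 : (m.choose (r + 1) : ℝ) ≤ 2 ^ m := by exact_mod_cast Nat.choose_le_two_pow m _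
        have a2 : (m.choose r : ℝ) ≤ 2 ^ m := by exact_mod_cast Nat.choose_le_two_pow m _
        calc (m.choose (r + 1) : ℝ) * (m.choose r) * (1 / 64) ^ m
            ≤ 2 ^ m * 2 ^ m * (1 / 64) ^ m := by gcongr
          _ = (1 / 16) ^ m := by rw [← mul_pow, ← mul_pow]; norm_num
          _ ≤ (1 / 16) ^ (r + 1) :=
            pow_le_pow_of_le_one (by norm_num) (by norm_num)
              (by have := Finset.mem_range.1 hr; omega)
    calc _ ≤ ∑ q ∈ A.powersetCard (r + 1) ×ˢ B.powersetCard r,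
          ((Ω.filter fun f => ∀ a ∈ q.1, ∀ j, f (a, j) ∈ q.2).card : ℝ) := by
            exact_mod_cast Finset.card_biUnion_le
      _ ≤ ∑ q ∈ A.powersetCard (r + 1) ×ˢ B.powersetCard r, c * Ω.card := Finset.sum_le_sum hp
      _ = (m.choose (r + 1) : ℝ) * (m.choose r) * c * Ω.card := by
        rw [Finset.sum_const, Finset.card_product, Finset.card_powersetCard,
          Finset.card_powersetCard, hA, hB, nsmul_eq_mul]; push_cast; ring
      _ ≤ _ := by gcongr
  have hgeom : ∀ n : ℕ, ∑ r ∈ Finset.range n, (1 / 16 : ℝ) ^ (r + 1) ≤ 1 / 15 := by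
    intro n
    have : ∑ r ∈ Finset.range n, (1 / 16 : ℝ) ^ (r + 1) = 1 / 15 - 1 / 15 * (1 / 16) ^ n := by
      induction n with
      | zero => simp
      | succ n ih => rw [Finset.sum_range_succ, ih, pow_succ]; ring
    rw [this]
    have : (0 : ℝ) ≤ 1 / 15 * (1 / 16) ^ n := by positivity
    linarith
  have hA1 := (Finset.card_le_card hsub).trans Finset.card_biUnion_le
  have hA2 := (Nat.cast_le (α := ℝ)).2 hA1
  rw [Nat.cast_sum] at hA2
  have hA3 := hA2.trans (Finset.sum_le_sum hterm)
  rw [← Finset.sum_mul] at hA3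
  refine hA3.trans ?_
  gcongr
  linarith [hgeom m]

lemma exists_matching {V : Type} [Fintype V] [DecidableEq V] (G : SimpleGraph V) (A : Finset V)
    (m : ℕ) (hA : A.card = m) (hB : Aᶜ.card = m)
    (hbip : ∀ u v : V, G.Adj u v → (u ∈ A ↔ v ∉ A)) (K : ℕ) (f : V × Fin K → V)
    (hf : ∀ p, G.Adj p.1 (f p))
    (h1 : ¬ BadPick K A Aᶜ f) (h2 : ¬ BadPick K Aᶜ A f) :
    ∃ M : G.Subgraph, M.IsPerfectMatching ∧
      ∀ u v, M.Adj u v → (∃ j, f (u, j) = v) ∨ (∃ j, f (v, j) = u) := by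
  set R : V → V → Prop := fun u v => (∃ j, f (u, j) = v) ∨ (∃ j, f (v, j) = u) with hR
  have hRG : ∀ u v, R u v → G.Adj u v := by
    rintro u v (⟨j, rfl⟩ | ⟨j, rfl⟩)
    · exact hf (u, j)
    · exact (hf (v, j)).symm
  have hRs : ∀ u v, R u v → R v u := fun u v h => h.symm
  let Γ : {a // a ∈ A} → Finset V := fun a => Finset.univ.filter fun v => R a v
  -- enlarging the target set gives a bad event
  have mk : ∀ P Q : Finset V, P.card = m → Q.card = m → ∀ S ⊆ P, ∀ X ⊆ Q,
      2 * S.card ≤ m + 1 → X.card < S.card → (∀ a ∈ S, ∀ j, f (a, j) ∈ X) →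
      BadPick K P Q f := by
    intro P Q hP hQ S hS X hX hc hlt hfX
    have hSP := Finset.card_le_card hS
    obtain ⟨W, hXW, hWQ, hWc⟩ := Finset.exists_subsuperset_card_eq hX
      (n := S.card - 1) (by omega) (by omega)
    exact ⟨S, hS, W, hWQ, by omega, by omega, fun a ha j => hXW (hfX a ha j)⟩
  have hall : ∀ s : Finset {a // a ∈ A}, s.card ≤ (s.biUnion Γ).card := by
    intro s
    by_contra hcon
    push Not at hcon
    set S : Finset V := s.map (Function.Embedding.subtype _) with hS
    have hSc : S.card = s.card := Finset.card_map _
    have hSA : S ⊆ A := by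
      intro x hx
      obtain ⟨y, _, rfl⟩ := Finset.mem_map.1 hx
      exact y.2
    set X := s.biUnion Γ with hX
    have hmemX : ∀ a ∈ S, ∀ v, R a v → v ∈ X := by
      intro a ha v hv
      obtain ⟨y, hy, rfl⟩ := Finset.mem_map.1 ha
      exact Finset.mem_biUnion.2 ⟨y, hy, Finset.mem_filter.2 ⟨Finset.mem_univ _, hv⟩⟩
    have hXB : X ⊆ Aᶜ := by
      intro v hv
      obtain ⟨y, hy, hv⟩ := Finset.mem_biUnion.1 hv
      have := hRG _ _ (Finset.mem_filter.1 hv).2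
      exact Finset.mem_compl.2 ((hbip _ _ this).1 y.2)
    by_cases hsm : 2 * S.card ≤ m + 1
    · exact h1 (mk A Aᶜ hA hB S hSA X hXB hsm (by omega)
        (fun a ha j => hmemX a ha _ (Or.inl ⟨j, rfl⟩)))
    · have hT : (Aᶜ \ X).card = m - X.card := by
        rw [Finset.card_sdiff_of_subset hXB, hB]
      have hXm := Finset.card_le_card hXB
      have hSm := Finset.card_le_card hSA
      have hAS : (A \ S).card = m - S.card := by
        rw [Finset.card_sdiff_of_subset hSA, hA]
      obtain ⟨T, hTsub, hTc⟩ := Finset.exists_subset_card_eq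
        (s := Aᶜ \ X) (n := min (Aᶜ \ X).card ((m + 1) / 2)) (min_le_left _ _)
      refine h2 (mk Aᶜ A hB hA T (hTsub.trans Finset.sdiff_subset) (A \ S) Finset.sdiff_subset
        (by omega) (by omega) ?_)
      intro b hb j
      have hb' := Finset.mem_sdiff.1 (hTsub hb)
      refine Finset.mem_sdiff.2 ⟨?_, ?_⟩
      · have := hbip _ _ (hf (b, j))
        have hbA := Finset.mem_compl.1 hb'.1
        simp only at this
        tauto
      · intro hcon2
        exact hb'.2 (hmemX _ hcon2 b (Or.inr ⟨j, rfl⟩))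
  obtain ⟨φ, hφi, hφ⟩ := (Finset.all_card_le_biUnion_card_iff_exists_injective Γ).1 hall
  have hφR : ∀ a : {a // a ∈ A}, R a (φ a) := fun a => (Finset.mem_filter.1 (hφ a)).2
  have hφB : ∀ a, φ a ∉ A := fun a => (hbip _ _ (hRG _ _ (hφR a))).1 a.2
  have hsurj : ∀ b, b ∉ A → ∃ a, φ a = b := by
    have himg : Finset.univ.image φ = Aᶜ := by
      apply Finset.eq_of_subset_of_card_le
      · intro x hx
        obtain ⟨a, _, rfl⟩ := Finset.mem_image.1 hx
        exact Finset.mem_compl.2 (hφB a)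
      · rw [Finset.card_image_of_injective _ hφi, hB, Finset.card_univ, Fintype.card_coe, hA]
    intro b hb
    have : b ∈ Finset.univ.image φ := by rw [himg]; exact Finset.mem_compl.2 hb
    obtain ⟨a, _, h⟩ := Finset.mem_image.1 this
    exact ⟨a, h⟩
  let adj : V → V → Prop := fun u v => (∃ a : {a // a ∈ A}, (a : V) = u ∧ φ a = v) ∨
    (∃ a : {a // a ∈ A}, (a : V) = v ∧ φ a = u)
  have hadjR : ∀ u v, adj u v → R u v := by
    rintro u v (⟨a, rfl, rfl⟩ | ⟨a, rfl, rfl⟩)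
    · exact hφR a
    · exact hRs _ _ (hφR a)
  refine ⟨⟨Set.univ, adj, fun {u v} h => hRG _ _ (hadjR u v h), fun _ => Set.mem_univ _,
    ⟨fun u v h => h.symm⟩⟩, ⟨?_, ?_⟩, hadjR⟩
  · intro v _
    by_cases hv : v ∈ A
    · refine ⟨φ ⟨v, hv⟩, Or.inl ⟨⟨v, hv⟩, rfl, rfl⟩, ?_⟩
      rintro w (⟨a, h, rfl⟩ | ⟨a, rfl, h⟩)
      · congr 1; exact Subtype.ext h
      · exact absurd hv (h ▸ hφB a)
    · obtain ⟨a, ha⟩ := hsurj v hv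
      refine ⟨a, Or.inr ⟨a, rfl, ha⟩, ?_⟩
      rintro w (⟨a', h, rfl⟩ | ⟨a', rfl, h⟩)
      · exact absurd a'.2 (h ▸ hv)
      · rw [hφi (h.trans ha.symm)]
  · intro v; exact Set.mem_univ v

lemma spread_count {V : Type} [Fintype V] [DecidableEq V] (A : Finset V) (K k : ℕ) (D : ℝ)
    (hD : 0 < D) (N : V → Finset V) (hdeg : ∀ v, D ≤ (N v).card) (a b : Fin k → V)
    (ha : ∀ i, a i ∈ A) (hb : ∀ i, b i ∉ A) (hai : Function.Injective a)
    (hbi : Function.Injective b) :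
    let Ω := Fintype.piFinset (fun p : V × Fin K => N p.1)
    ((Ω.filter fun f => ∀ i, (∃ j, f (a i, j) = b i) ∨ (∃ j, f (b i, j) = a i)).card : ℝ) ≤
      (2 * K / D) ^ k * Ω.card := by
  intro Ω
  let c : (Fin k → Bool × Fin K) → Fin k → V × Fin K :=
    fun σ i => (if (σ i).1 then a i else b i, (σ i).2)
  let y : (Fin k → Bool × Fin K) → Fin k → V := fun σ i => if (σ i).1 then b i else a i
  have hci : ∀ σ, Function.Injective (c σ) := by
    intro σ i i' h
    have h' : (if (σ i).1 then a i else b i) = (if (σ i').1 then a i' else b i') :=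
      congrArg Prod.fst h
    split_ifs at h'
    · exact hai h'
    · exact absurd (h' ▸ ha i) (hb i')
    · exact absurd (h' ▸ ha i') (hb i)
    · exact hbi h'
  have hsub : (Ω.filter fun f => ∀ i, (∃ j, f (a i, j) = b i) ∨ (∃ j, f (b i, j) = a i)) ⊆
      (Finset.univ : Finset (Fin k → Bool × Fin K)).biUnion
        fun σ => Ω.filter fun f => ∀ p ∈ Finset.univ.image (c σ),
          f p ∈ Finset.univ.filter fun v => ∀ i, c σ i = p → v = y σ i := by
    intro f hf
    obtain ⟨hfΩ, hf⟩ := Finset.mem_filter.1 hf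
    have : ∀ i, ∃ q : Bool × Fin K, f (if q.1 then a i else b i, q.2) = if q.1 then b i else a i := by
      intro i
      rcases hf i with ⟨j, hj⟩ | ⟨j, hj⟩
      · exact ⟨(true, j), by simpa using hj⟩
      · exact ⟨(false, j), by simpa using hj⟩
    choose σ hσ using this
    refine Finset.mem_biUnion.2 ⟨σ, Finset.mem_univ _, Finset.mem_filter.2 ⟨hfΩ, ?_⟩⟩
    intro p _
    refine Finset.mem_filter.2 ⟨Finset.mem_univ _, ?_⟩
    rintro i rfl
    exact hσ i
  have hA1 := (Finset.card_le_card hsub).trans Finset.card_biUnion_le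
  have hA2 := (Nat.cast_le (α := ℝ)).2 hA1
  rw [Nat.cast_sum] at hA2
  refine hA2.trans ?_
  have hterm : ∀ σ ∈ (Finset.univ : Finset (Fin k → Bool × Fin K)),
      ((Ω.filter fun f => ∀ p ∈ Finset.univ.image (c σ),
          f p ∈ Finset.univ.filter fun v => ∀ i, c σ i = p → v = y σ i).card : ℝ)
        ≤ (1 / D) ^ k * Ω.card := by
    intro σ _
    have := card_restrict_le (fun p : V × Fin K => N p.1)
      (fun p => Finset.univ.filter fun v => ∀ i, c σ i = p → v = y σ i)
      (Finset.univ.image (c σ)) (1 / D) ?_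
    · rw [Finset.card_image_of_injective _ (hci σ), Finset.card_univ, Fintype.card_fin] at this
      exact this
    · intro p hp
      obtain ⟨i, _, hi⟩ := Finset.mem_image.1 hp
      have h1 : ((N p.1 ∩ Finset.univ.filter fun v => ∀ i, c σ i = p → v = y σ i).card) ≤ 1 := by
        rw [Finset.card_le_one]
        intro x hx x' hx'
        rw [(Finset.mem_filter.1 (Finset.mem_inter.1 hx).2).2 i hi,
          (Finset.mem_filter.1 (Finset.mem_inter.1 hx').2).2 i hi]
      have h1' : ((N p.1 ∩ Finset.univ.filter fun v => ∀ i, c σ i = p → v = y σ i).card : ℝ) ≤ 1 := by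
        exact_mod_cast h1
      refine h1'.trans ?_
      have := hdeg p.1
      rw [one_div, inv_mul_eq_div, one_le_div hD]
      exact this
  refine (Finset.sum_le_sum hterm).trans ?_
  rw [Finset.sum_const, nsmul_eq_mul, Finset.card_univ, Fintype.card_fun, Fintype.card_prod,
    Fintype.card_bool, Fintype.card_fin, Fintype.card_fin, ← mul_assoc]
  apply le_of_eq
  congr 1
  push_cast
  rw [← mul_pow]
  congr 1
  ring

theorem spread_perfect_matchings_eps_super_regular (d₀ : ℝ) (hd₀ : 0 < d₀) :
    ∃ ε C : ℝ, 0 < ε ∧ 0 < C ∧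
      ∀ (V : Type) [Fintype V] [DecidableEq V] (G : SimpleGraph V) (A : Finset V) (m : ℕ),
        A.card = m → Aᶜ.card = m →
        (∀ u v : V, G.Adj u v → (u ∈ A ↔ v ∉ A)) →
        d₀ ≤ edgeDensityR G A Aᶜ →
        IsEpsSuperRegularPair G A Aᶜ ε m →
        ∃ μ : PMF {M : G.Subgraph // M.IsPerfectMatching},
          ∀ (k : ℕ) (e : Fin k → Sym2 V), Function.Injective e →
            (∀ i, e i ∈ G.edgeSet) →
            μ.toOuterMeasure {M | ∀ i, e i ∈ (M : G.Subgraph).edgeSet} ≤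
              ENNReal.ofReal ((C / m) ^ k) := by
  obtain ⟨δ, hδ, hδ1, hδd⟩ : ∃ δ : ℝ, 0 < δ ∧ δ ≤ 1 ∧ 2 * δ ≤ d₀ :=
    ⟨min d₀ 1 / 2, by positivity, by linarith [min_le_right d₀ 1], by linarith [min_le_left d₀ 1]⟩
  obtain ⟨L, hL⟩ := exists_pow_lt_of_lt_one (show (0 : ℝ) < 1 / 64 by norm_num)
    (show 1 - δ / 2 < 1 by linarith)
  obtain ⟨K, hK, hKL⟩ : ∃ K : ℕ, 144 ≤ δ ^ 2 * 2 ^ K ∧ 4 * (L : ℝ) ≤ (K + 2 : ℕ) * δ := by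
    obtain ⟨K1, hK1⟩ := pow_unbounded_of_one_lt (144 / δ ^ 2) (one_lt_two)
    obtain ⟨K2, hK2⟩ := exists_nat_ge (4 * (L : ℝ) / δ)
    refine ⟨K1 + K2, ?_, ?_⟩
    · rw [div_lt_iff₀ (by positivity)] at hK1
      have : (2 : ℝ) ^ K1 ≤ 2 ^ (K1 + K2) := pow_le_pow_right₀ (by norm_num) (by omega)
      nlinarith [sq_nonneg δ, mul_le_mul_of_nonneg_right this (sq_nonneg δ)]
    · rw [div_le_iff₀ hδ] at hK2
      push_cast
      nlinarith [mul_nonneg (Nat.cast_nonneg (α := ℝ) K1) hδ.le]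
  refine ⟨δ / 4, 4 * (K + 2 : ℕ) / δ, by positivity, by positivity, ?_⟩
  intro V _ _ G A m hA hB hbip hd hsr
  obtain ⟨hreg, -, -, hdA, hdB⟩ := hsr
  have hm : 1 ≤ m := by
    by_contra hc
    have : m = 0 := by omega
    subst this
    rw [Finset.card_eq_zero] at hA
    subst hA
    simp [edgeDensityR] at hd
    linarith
  have hm0 : (0 : ℝ) < m := by exact_mod_cast hm
  set d := edgeDensityR G A Aᶜ with hdd
  let N : V → Finset V := fun v => Finset.univ.filter fun w => G.Adj v w
  have hNA : ∀ a ∈ A, N a ⊆ Aᶜ := by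
    intro a ha w hw
    exact Finset.mem_compl.2 ((hbip _ _ (Finset.mem_filter.1 hw).2).1 ha)
  have hNB : ∀ a ∈ Aᶜ, N a ⊆ A := by
    intro a ha w hw
    have := hbip _ _ (Finset.mem_filter.1 hw).2
    have := Finset.mem_compl.1 ha
    tauto
  have hNint : ∀ v (Y : Finset V), N v ∩ Y = Y.filter fun w => G.Adj v w := by
    intro v Y; ext w; simp [N, and_comm]
  have hdegA : ∀ a ∈ A, δ * m ≤ (N a).card := by
    intro a ha
    have h := (hdA a ha).1
    rw [← hNint, Finset.inter_eq_left.2 (hNA a ha)] at h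
    refine le_trans ?_ h
    gcongr
    linarith
  have hdegB : ∀ a ∈ Aᶜ, δ * m ≤ (N a).card := by
    intro a ha
    have h := (hdB a ha).1
    rw [← hNint, Finset.inter_eq_left.2 (hNB a ha)] at h
    refine le_trans ?_ h
    gcongr
    linarith
  have hdeg : ∀ v, δ * m ≤ (N v).card := by
    intro v
    by_cases hv : v ∈ A
    · exact hdegA v hv
    · exact hdegB v (Finset.mem_compl.2 hv)
  have hregA : ∀ X ⊆ A, ∀ Y ⊆ Aᶜ, δ / 4 * m ≤ X.card → δ / 4 * m ≤ Y.card →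
      δ * X.card * Y.card ≤ ∑ a ∈ X, ((N a ∩ Y).card : ℝ) := by
    intro X hX Y hY hXc hYc
    have h := hreg X hX Y hY (by rw [hA]; exact hXc) (by rw [hB]; exact hYc)
    have hX0 : (0 : ℝ) < X.card := lt_of_lt_of_le (by positivity) hXc
    have hY0 : (0 : ℝ) < Y.card := lt_of_lt_of_le (by positivity) hYc
    have h2 : δ ≤ edgeDensityR G X Y := by
      have := (abs_le.1 h).1
      linarith
    simp only [hNint]
    unfold edgeDensityR at h2
    rw [le_div_iff₀ (by positivity)] at h2
    linarith
  have hregB : ∀ X ⊆ Aᶜ, ∀ Y ⊆ A, δ / 4 * m ≤ X.card → δ / 4 * m ≤ Y.card →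
      δ * X.card * Y.card ≤ ∑ a ∈ X, ((N a ∩ Y).card : ℝ) := by
    intro X hX Y hY hXc hYc
    have h := hregA Y hY X hX hYc hXc
    have e : ∑ a ∈ Y, (N a ∩ X).card = ∑ a ∈ X, (N a ∩ Y).card := by
      have := Finset.sum_card_bipartiteAbove_eq_sum_card_bipartiteBelow (s := Y) (t := X) G.Adj
      simp only [hNint]
      rw [show (∑ a ∈ Y, (X.filter fun w => G.Adj a w).card) = _ from this]
      apply Finset.sum_congr rfl
      intro b _
      congr 1
      ext w
      simp [Finset.bipartiteBelow, G.adj_comm]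
    have e' : ∑ a ∈ Y, ((N a ∩ X).card : ℝ) = ∑ a ∈ X, ((N a ∩ Y).card : ℝ) := by exact_mod_cast e
    rw [← e']
    linarith
  have hb1 := bad_count δ hδ hδ1 K L m hK hL.le hKL A Aᶜ N hA hB hm hNA hdegA hregA
  have hb2 := bad_count δ hδ hδ1 K L m hK hL.le hKL Aᶜ A N hB hA hm hNB hdegB hregB
  set Ω := Fintype.piFinset (fun p : V × Fin (K + 2) => N p.1) with hΩ
  simp only at hb1 hb2
  have hΩpos : (0 : ℝ) < Ω.card := by
    rw [hΩ, Fintype.card_piFinset]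
    push_cast
    apply Finset.prod_pos
    intro p _
    exact lt_of_lt_of_le (by positivity) (hdeg p.1)
  set good := Ω.filter (fun f => ¬ BadPick (K + 2) A Aᶜ f ∧ ¬ BadPick (K + 2) Aᶜ A f) with hgood
  have hgc : (Ω.card : ℝ) / 2 ≤ good.card := by
    have hsub : Ω ⊆ good ∪ ((Ω.filter fun f => BadPick (K + 2) A Aᶜ f) ∪
        (Ω.filter fun f => BadPick (K + 2) Aᶜ A f)) := by
      intro f hf
      simp only [hgood, Finset.mem_union, Finset.mem_filter]
      tauto
    have h1 := (Finset.card_le_card hsub).trans ((Finset.card_union_le _ _).trans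
      (Nat.add_le_add_left (Finset.card_union_le _ _) _))
    have h2 : (Ω.card : ℝ) ≤ good.card + ((Ω.filter fun f => BadPick (K + 2) A Aᶜ f).card +
        (Ω.filter fun f => BadPick (K + 2) Aᶜ A f).card) := by exact_mod_cast h1
    linarith
  have hgpos : (0 : ℝ) < good.card := by linarith
  have hgne : good.Nonempty := by
    rw [← Finset.card_pos]; exact_mod_cast hgpos
  have hex : ∀ f ∈ good, ∃ M : {M : G.Subgraph // M.IsPerfectMatching},
      ∀ u v, M.1.Adj u v → (∃ j, f (u, j) = v) ∨ (∃ j, f (v, j) = u) := by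
    intro f hf
    obtain ⟨hfΩ, h1, h2⟩ := Finset.mem_filter.1 hf
    obtain ⟨M, hM, hM'⟩ := exists_matching G A m hA hB hbip (K + 2) f
      (fun p => (Finset.mem_filter.1 (Fintype.mem_piFinset.1 hfΩ p)).2) h1 h2
    exact ⟨⟨M, hM⟩, hM'⟩
  obtain ⟨f₀, hf₀⟩ := id hgne
  obtain ⟨M₀, -⟩ := hex f₀ hf₀
  have hex' : ∀ f, ∃ M : {M : G.Subgraph // M.IsPerfectMatching}, f ∈ good →
      ∀ u v, M.1.Adj u v → (∃ j, f (u, j) = v) ∨ (∃ j, f (v, j) = u) := by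
    intro f
    by_cases hf : f ∈ good
    · obtain ⟨M, hM⟩ := hex f hf
      exact ⟨M, fun _ => hM⟩
    · exact ⟨M₀, fun h => absurd h hf⟩
  choose F hF using hex'
  refine ⟨(PMF.uniformOfFinset good hgne).map F, ?_⟩
  intro k e he heG
  rcases Nat.eq_zero_or_pos k with rfl | hk
  · rw [(PMF.toOuterMeasure_apply_eq_one_iff _ _).2 (fun M _ i => i.elim0)]
    simp
  by_cases hemp : ∃ M : {M : G.Subgraph // M.IsPerfectMatching}, ∀ i, e i ∈ M.1.edgeSet
  swap
  · have : {M : {M : G.Subgraph // M.IsPerfectMatching} | ∀ i, e i ∈ (M : G.Subgraph).edgeSet}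
        = ∅ := by
      ext M
      simp only [Set.mem_ofPred_eq, Set.mem_empty_iff_false, iff_false]
      exact fun h => hemp ⟨M, h⟩
    rw [this]
    simp
  obtain ⟨M, hM⟩ := hemp
  have hab : ∀ i, ∃ a b, a ∈ A ∧ b ∉ A ∧ e i = s(a, b) ∧ M.1.Adj a b := by
    intro i
    have h := hM i
    induction hei : e i with
    | _ u v =>
      rw [hei] at h
      have hadj : M.1.Adj u v := h
      have hb := hbip _ _ hadj.adj_sub
      by_cases hu : u ∈ A
      · exact ⟨u, v, hu, hb.1 hu, rfl, hadj⟩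
      · exact ⟨v, u, by tauto, hu, Sym2.eq_swap, hadj.symm⟩
  choose a b ha hb heab hMab using hab
  have hai : Function.Injective a := by
    intro i i' h
    apply he
    have := (M.2.1 (M.1.edge_vert (hMab i))).unique (hMab i) (h ▸ hMab i')
    rw [heab, heab, h, this]
  have hbi : Function.Injective b := by
    intro i i' h
    apply he
    have := (M.2.1 (M.1.edge_vert (hMab i).symm)).unique (hMab i).symm (h ▸ (hMab i').symm)
    rw [heab, heab, h, this]
  have hsc := spread_count A (K + 2) k (δ * m) (by positivity) N hdeg a b ha hb hai hbi
  simp only at hsc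
  rw [← hΩ] at hsc
  rw [PMF.toOuterMeasure_map_apply, PMF.toOuterMeasure_uniformOfFinset_apply]
  have hnum : ((good.filter fun f => f ∈ F ⁻¹' {M | ∀ i, e i ∈ (M : G.Subgraph).edgeSet}).card : ℝ)
      ≤ (2 * (K + 2 : ℕ) / (δ * m)) ^ k * Ω.card := by
    refine le_trans ?_ hsc
    norm_cast
    apply Finset.card_le_card
    intro f hf
    obtain ⟨hfg, hfe⟩ := Finset.mem_filter.1 hf
    refine Finset.mem_filter.2 ⟨(Finset.mem_filter.1 hfg).1, fun i => ?_⟩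
    have h := hfe i
    rw [heab i] at h
    exact hF f hfg _ _ h
  have hreal : ((good.filter fun f => f ∈ F ⁻¹' {M | ∀ i, e i ∈ (M : G.Subgraph).edgeSet}).card : ℝ)
      / good.card ≤ (4 * (K + 2 : ℕ) / δ / m) ^ k := by
    rw [div_le_iff₀ hgpos]
    have e1 : (4 * ((K + 2 : ℕ) : ℝ) / δ / m) ^ k = 2 ^ k * (2 * (K + 2 : ℕ) / (δ * m)) ^ k := by
      rw [← mul_pow]; congr 1; field_simp; norm_num
    have h2k : (2 : ℝ) ≤ 2 ^ k := by
      calc (2 : ℝ) = 2 ^ 1 := by norm_num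
        _ ≤ 2 ^ k := pow_le_pow_right₀ (by norm_num) hk
    rw [e1]
    have hp : (0 : ℝ) ≤ (2 * (K + 2 : ℕ) / (δ * m)) ^ k := by positivity
    calc _ ≤ _ := hnum
      _ = 2 * (2 * (K + 2 : ℕ) / (δ * m)) ^ k * (Ω.card / 2) := by ring
      _ ≤ 2 ^ k * (2 * (K + 2 : ℕ) / (δ * m)) ^ k * good.card := by gcongr
  refine le_trans (le_of_eq ?_) (ENNReal.ofReal_le_ofReal hreal)
  rw [ENNReal.ofReal_div_of_pos hgpos, ENNReal.ofReal_natCast, ENNReal.ofReal_natCast]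
end

section
/- For every d₀, δ > 0 there exist ε > 0 and a constant C = C(d₀, δ) such that the following holds. Let G be an (ε, δ)-super-regular bipartite graph with parts of size m and density d ≥ d₀. Then there exists a (C/m)-spread probability distribution μ over the perfect matchings of G. -/
open Finset
open scoped Classical

set_option linter.unusedSectionVars false

section Core
variable {α β : Type} [Fintype α] [Fintype β]

/-- Bijections which respect `R` outside `I`. -/
noncomputable def ZSet (R : α → β → Prop) (I : Finset α) : Finset (α ≃ β) :=
  univ.filter fun σ => ∀ x, x ∉ I → R x (σ x)

/-- Bijections which respect `R` outside `I` and agree with `τ` on `I`. -/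
noncomputable def NSet (R : α → β → Prop) (I : Finset α) (τ : α ≃ β) : Finset (α ≃ β) :=
  univ.filter fun σ => (∀ x, x ∉ I → R x (σ x)) ∧ ∀ x ∈ I, σ x = τ x

/-- Pairs along which `σ` can be augmented at `a`. -/
noncomputable def JSet (R : α → β → Prop) (I : Finset α) (a : α) (σ : α ≃ β) : Finset (α × α) :=
  univ.filter fun p => p.1 ∉ I ∧ p.2 ∉ I ∧ R a (σ p.1) ∧ R p.2 (σ a) ∧ R p.1 (σ p.2)

/-- The augmented bijection. -/
noncomputable def augm (a : α) (σ : α ≃ β) (p : α × α) : α ≃ β :=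
  (Equiv.swap a p.1 * Equiv.swap p.1 p.2 : Equiv.Perm α).trans σ

lemma augm_apply (a : α) (σ : α ≃ β) (p : α × α) (z : α) :
    augm a σ p z = σ (Equiv.swap a p.1 (Equiv.swap p.1 p.2 z)) := rfl

lemma augm_inj (a : α) (p : α × α) {σ σ' : α ≃ β} (h : augm a σ p = augm a σ' p) : σ = σ' := by
  ext z
  have := congrArg (fun f : α ≃ β => f ((Equiv.swap p.1 p.2) ((Equiv.swap a p.1) z))) h
  simpa [augm_apply] using this

lemma augm_snd (a : α) (σ : α ≃ β) (p : α × α) : augm a σ p p.2 = σ a := by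
  simp [augm_apply]

lemma augm_mem (R : α → β → Prop) (I : Finset α) (a : α) (ha : a ∈ I) (σ : α ≃ β)
    (hσ : ∀ x, x ∉ I → R x (σ x)) (p : α × α) (hp : p ∈ JSet R I a σ) :
    ∀ x, x ∉ I.erase a → R x (augm a σ p x) := by
  obtain ⟨y, z⟩ := p
  simp only [JSet, mem_filter, mem_univ, true_and] at hp
  obtain ⟨h1, h2, h3, h4, h5⟩ := hp
  have hay : a ≠ y := fun h => h1 (h ▸ ha)
  have haz : a ≠ z := fun h => h2 (h ▸ ha)
  intro x hx
  rw [augm_apply]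
  by_cases hxa : x = a
  · subst hxa
    rw [Equiv.swap_apply_of_ne_of_ne hay haz, Equiv.swap_apply_left]; exact h3
  have hxI : x ∉ I := fun h => hx (mem_erase.2 ⟨hxa, h⟩)
  by_cases hxz : x = z
  · subst hxz
    simpa using h4
  by_cases hxy : x = y
  · subst hxy
    simp only [Equiv.swap_apply_left]
    rw [Equiv.swap_apply_of_ne_of_ne (Ne.symm haz) (Ne.symm hxz)]; exact h5
  · rw [Equiv.swap_apply_of_ne_of_ne hxy hxz, Equiv.swap_apply_of_ne_of_ne hxa hxy]
    exact hσ x hxI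

lemma augm_fix (I : Finset α) (R : α → β → Prop) (a : α) (σ : α ≃ β)
    (p : α × α) (hp : p ∈ JSet R I a σ) (x : α) (hx : x ∈ I.erase a) :
    augm a σ p x = σ x := by
  obtain ⟨y, z⟩ := p
  simp only [JSet, mem_filter, mem_univ, true_and] at hp
  obtain ⟨h1, h2, h3, h4, h5⟩ := hp
  have hx' := mem_erase.1 hx
  have hxy : x ≠ y := fun h => h1 (h ▸ hx'.2)
  have hxz : x ≠ z := fun h => h2 (h ▸ hx'.2)
  rw [augm_apply, Equiv.swap_apply_of_ne_of_ne hxy hxz, Equiv.swap_apply_of_ne_of_ne hx'.1 hxy]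

/-- The hypotheses extracted from super-regularity. -/
structure Hyp (R : α → β → Prop) (m : ℕ) (d δ : ℝ) : Prop where
  dpos : 0 < d
  δpos : 0 < δ
  cardA : Fintype.card α = m
  degA : ∀ a, δ * m ≤ ((univ.filter fun b => R a b).card : ℝ)
  degB : ∀ b, δ * m ≤ ((univ.filter fun a => R a b).card : ℝ)
  dens : ∀ (X : Finset α) (Y : Finset β), δ / 2 * m ≤ X.card → δ / 2 * m ≤ Y.card →
    d * (X.card * Y.card) ≤ ∑ x ∈ X, ((Y.filter fun y => R x y).card : ℝ)

variable {R : α → β → Prop} {m : ℕ} {d δ : ℝ}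

lemma JSet_card (H : Hyp R m d δ) (I : Finset α) (hI : (I.card : ℝ) ≤ δ / 2 * m) (a : α)
    (σ : α ≃ β) : d * (δ / 2) ^ 2 * m ^ 2 ≤ ((JSet R I a σ).card : ℝ) := by
  set X : Finset α := univ.filter fun x => x ∉ I ∧ R a (σ x) with hX
  set Y : Finset α := univ.filter fun x => x ∉ I ∧ R x (σ a) with hY
  have hXc : δ / 2 * m ≤ X.card := by
    have h1 := H.degA a
    have h2 : (univ.filter fun b => R a b).card ≤ X.card + I.card := by
      have : (univ.filter fun b => R a b) ⊆ (X ∪ I).map σ.toEmbedding := by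
        intro b hb
        simp only [mem_filter, mem_univ, true_and] at hb
        refine mem_map.2 ⟨σ.symm b, ?_, by simp⟩
        by_cases h : σ.symm b ∈ I <;> simp [hX, h, hb]
      exact (card_le_card this).trans (by rw [card_map]; exact card_union_le _ _)
    have h3 : ((univ.filter fun b => R a b).card : ℝ) ≤ X.card + I.card := by exact_mod_cast h2
    linarith
  have hYc : δ / 2 * m ≤ Y.card := by
    have h1 := H.degB (σ a)
    have h2 : (univ.filter fun x => R x (σ a)).card ≤ Y.card + I.card := by
      have : (univ.filter fun x => R x (σ a)) ⊆ (Y ∪ I) := by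
        intro b hb
        simp only [mem_filter, mem_univ, true_and] at hb
        by_cases h : b ∈ I <;> simp [hY, h, hb]
      exact (card_le_card this).trans (card_union_le _ _)
    have h3 : ((univ.filter fun x => R x (σ a)).card : ℝ) ≤ Y.card + I.card := by exact_mod_cast h2
    linarith
  have hd := H.dens X (Y.map σ.toEmbedding) hXc (by rwa [card_map])
  rw [card_map] at hd
  have hJ : (∑ x ∈ X, (((Y.map σ.toEmbedding).filter fun y => R x y).card : ℝ)) ≤
      ((JSet R I a σ).card : ℝ) := by
    have : (X.sigma fun x => Y.filter fun y => R x (σ y)).card ≤ (JSet R I a σ).card := by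
      refine card_le_card_of_injOn (fun p => (p.1, p.2)) ?_ ?_
      · rintro ⟨x, y⟩ hp
        simp only [hX, hY, coe_sigma, Set.mem_sigma_iff, mem_coe, mem_filter, mem_univ,
          true_and] at hp
        simp only [JSet, coe_filter, mem_univ, true_and, Set.mem_ofPred_eq]
        tauto
      · rintro ⟨x, y⟩ _ ⟨x', y'⟩ _ h
        simp only [Prod.mk.injEq] at h
        obtain ⟨rfl, rfl⟩ := h; rfl
    rw [card_sigma] at this
    have h2 : ∀ x, ((Y.map σ.toEmbedding).filter fun y => R x y).card =
        (Y.filter fun y => R x (σ y)).card := by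
      intro x
      rw [filter_map, card_map]; rfl
    simp only [h2]
    exact_mod_cast this
  refine le_trans ?_ (hd.trans hJ)
  have h0 : 0 ≤ δ / 2 * m := by have := H.δpos; positivity
  have : (δ / 2 * m) * (δ / 2 * m) ≤ X.card * Y.card := mul_le_mul hXc hYc h0 (by positivity)
  have := mul_le_mul_of_nonneg_left this H.dpos.le
  linarith [this]

lemma count_aux {ι κ : Type} (S : Finset ι) (J : ι → Finset κ) (n : ℕ) (c : ℝ)
    (hc : ∀ i ∈ S, c ≤ (J i).card) (h : (S.sigma J).card ≤ n) : c * S.card ≤ n := by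
  rw [card_sigma] at h
  have h1 : (∑ i ∈ S, c) ≤ ∑ i ∈ S, ((J i).card : ℝ) := sum_le_sum hc
  rw [sum_const, nsmul_eq_mul] at h1
  have h2 : (∑ i ∈ S, ((J i).card : ℝ)) ≤ n := by exact_mod_cast h
  linarith

lemma Z_small (H : Hyp R m d δ) (hm : 0 < m) (I : Finset α) (hI : (I.card : ℝ) ≤ δ / 2 * m)
    (a : α) (ha : a ∈ I) :
    d * (δ / 2) ^ 2 * (ZSet R I).card ≤ ((ZSet R (I.erase a)).card : ℝ) := by
  have key := count_aux (ZSet R I) (fun σ => JSet R I a σ)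
    ((ZSet R (I.erase a)).card * (m * m)) _ (fun σ _ => JSet_card H I hI a σ) (by
      rw [← H.cardA, ← Fintype.card_prod, ← card_univ, ← card_product]
      refine card_le_card_of_injOn (fun q => (augm a q.1 q.2, q.2)) ?_ ?_
      · rintro ⟨σ, p⟩ hp
        simp only [coe_sigma, Set.mem_sigma_iff, mem_coe] at hp
        have h1 := hp.1
        simp only [ZSet, mem_filter, mem_univ, true_and] at h1
        simp only [coe_product, Set.mem_prod, mem_coe, mem_univ, and_true, ZSet, mem_filter,
          true_and]
        exact augm_mem R I a ha σ h1 p hp.2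
      · rintro ⟨σ, p⟩ _ ⟨σ', p'⟩ _ h
        simp only [Prod.mk.injEq] at h
        obtain ⟨h1, rfl⟩ := h
        rw [augm_inj a p h1])
  push_cast at key
  have hm' : (0 : ℝ) < m ^ 2 := by positivity
  refine le_of_mul_le_mul_right ?_ hm'
  nlinarith [key]

lemma N_small (H : Hyp R m d δ) (hm : 0 < m) (I : Finset α) (hI : (I.card : ℝ) ≤ δ / 2 * m)
    (τ : α ≃ β) (a : α) (ha : a ∈ I) :
    d * (δ / 2) ^ 2 * m * (NSet R I τ).card ≤ ((NSet R (I.erase a) τ).card : ℝ) := by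
  have key := count_aux (NSet R I τ) (fun σ => JSet R I a σ)
    ((NSet R (I.erase a) τ).card * m) _ (fun σ _ => JSet_card H I hI a σ) (by
      rw [← H.cardA, ← card_univ, ← card_product]
      refine card_le_card_of_injOn (fun q => (augm a q.1 q.2, q.2.1)) ?_ ?_
      · rintro ⟨σ, p⟩ hp
        simp only [coe_sigma, Set.mem_sigma_iff, mem_coe] at hp
        have h1 := hp.1
        simp only [NSet, mem_filter, mem_univ, true_and] at h1
        simp only [coe_product, Set.mem_prod, mem_coe, mem_univ, and_true, NSet, mem_filter,
          true_and]
        refine ⟨augm_mem R I a ha σ h1.1 p hp.2, fun x hx => ?_⟩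
        rw [augm_fix I R a σ p hp.2 x hx]
        exact h1.2 x (mem_of_mem_erase hx)
      · rintro ⟨σ, p⟩ hp ⟨σ', p'⟩ hp' h
        simp only [coe_sigma, Set.mem_sigma_iff, mem_coe] at hp hp'
        have h1 := hp.1
        have h1' := hp'.1
        simp only [NSet, mem_filter, mem_univ, true_and] at h1 h1'
        simp only [Prod.mk.injEq] at h
        obtain ⟨h2, h3⟩ := h
        have h4 : p.2 = p'.2 := by
          apply (augm a σ p).injective
          rw [augm_snd, h2, augm_snd, h1.2 a ha, h1'.2 a ha]
        obtain rfl : p = p' := Prod.ext h3 h4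
        rw [augm_inj a p h2])
  push_cast at key
  have hm' : (0 : ℝ) < m := by positivity
  refine le_of_mul_le_mul_right ?_ hm'
  nlinarith [key]

lemma Z_big (H : Hyp R m d δ) (I : Finset α) (hI : δ / 2 * m ≤ (I.card : ℝ))
    (hne : I.Nonempty) :
    ∃ a ∈ I, d * (ZSet R I).card ≤ ((ZSet R (I.erase a)).card : ℝ) := by
  have key := count_aux (ZSet R I) (fun σ => I.sigma fun a => I.filter fun b => R a (σ b))
    ((I.sigma fun a => ZSet R (I.erase a) ×ˢ I).card) (d * (I.card * I.card)) (fun σ _ => by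
      have hd := H.dens I (I.map σ.toEmbedding) hI (by rwa [card_map])
      have h2 : ∀ x, ((I.map σ.toEmbedding).filter fun y => R x y).card =
          (I.filter fun y => R x (σ y)).card := by
        intro x
        rw [filter_map, card_map]; rfl
      simp only [h2, card_map] at hd
      rw [card_sigma]; push_cast; exact hd) (by
      refine card_le_card_of_injOn
        (fun q => ⟨q.2.1, ((Equiv.swap q.2.1 q.2.2 : Equiv.Perm α).trans q.1, q.2.2)⟩) ?_ ?_
      · rintro ⟨σ, a, b⟩ hp
        simp only [coe_sigma, Set.mem_sigma_iff, mem_coe, mem_filter, ZSet, mem_univ,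
          true_and] at hp
        obtain ⟨h1, h2, h3, h4⟩ := hp
        simp only [coe_sigma, Set.mem_sigma_iff, mem_coe, mem_filter, ZSet, mem_univ,
          true_and, mem_product, h2, h3, and_true]
        intro x hx
        by_cases hxa : x = a
        · subst hxa; simpa using h4
        have hxI : x ∉ I := fun h => hx (mem_erase.2 ⟨hxa, h⟩)
        have hxb : x ≠ b := fun h => hxI (h ▸ h3)
        simp only [Equiv.trans_apply]
        rw [Equiv.swap_apply_of_ne_of_ne hxa hxb]
        exact h1 x hxI
      · rintro ⟨σ, a, b⟩ _ ⟨σ', a', b'⟩ _ h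
        simp only [Sigma.mk.injEq] at h
        obtain ⟨rfl, h⟩ := h
        simp only [heq_eq_eq, Prod.mk.injEq] at h
        obtain ⟨h1, rfl⟩ := h
        have : σ = σ' := by
          ext z
          have := congrArg (fun f : α ≃ β => f (Equiv.swap a b z)) h1
          simpa using this
        rw [this])
  rw [card_sigma] at key
  simp only [card_product] at key
  push_cast at key
  rw [← sum_mul] at key
  have hpos : (0 : ℝ) < I.card := by exact_mod_cast hne.card_pos
  have key2 : (∑ a ∈ I, d * ((ZSet R I).card : ℝ)) ≤ ∑ a ∈ I, ((ZSet R (I.erase a)).card : ℝ) := by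
    rw [sum_const, nsmul_eq_mul]
    refine le_of_mul_le_mul_right ?_ hpos
    linarith [key]
  exact exists_le_of_sum_le hne key2

lemma δ_le (H : Hyp R m d δ) (hm : 0 < m) (hB : Fintype.card β = m) : δ ≤ 1 := by
  obtain ⟨a⟩ : Nonempty α := Fintype.card_pos_iff.1 (H.cardA ▸ hm)
  have h1 := H.degA a
  have h2 : (univ.filter fun b => R a b).card ≤ m := hB ▸ card_le_univ _
  have h3 : ((univ.filter fun b => R a b).card : ℝ) ≤ m := by exact_mod_cast h2
  have hm' : (0 : ℝ) < m := by positivity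
  nlinarith

lemma Z_lower (H : Hyp R m d δ) (hm : 0 < m) (hB : Fintype.card β = m) :
    ∀ (n : ℕ) (I : Finset α), I.card = n →
      (d * (δ / 2) ^ 2) ^ n * (ZSet R I).card ≤ ((ZSet R ∅).card : ℝ) := by
  have hδ := δ_le H hm hB
  have hδ0 := H.δpos
  have hd := H.dpos
  intro n
  induction n with
  | zero => intro I hI; rw [card_eq_zero] at hI; subst hI; simp
  | succ n ih =>
    intro I hI
    have hne : I.Nonempty := card_pos.1 (by omega)
    have hstep : ∃ a ∈ I, d * (δ / 2) ^ 2 * (ZSet R I).card ≤ ((ZSet R (I.erase a)).card : ℝ) := by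
      rcases le_total (I.card : ℝ) (δ / 2 * m) with h | h
      · obtain ⟨a, ha⟩ := hne
        exact ⟨a, ha, Z_small H hm I h a ha⟩
      · obtain ⟨a, ha, h2⟩ := Z_big H I h hne
        refine ⟨a, ha, le_trans ?_ h2⟩
        have : d * (δ / 2) ^ 2 ≤ d := by
          have : (δ / 2) ^ 2 ≤ 1 := by nlinarith
          nlinarith
        exact mul_le_mul_of_nonneg_right this (by positivity)
    obtain ⟨a, ha, h⟩ := hstep
    have := ih (I.erase a) (by rw [card_erase_of_mem ha]; omega)
    refine le_trans ?_ this
    rw [pow_succ, mul_assoc]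
    exact mul_le_mul_of_nonneg_left h (by positivity)

lemma N_upper (H : Hyp R m d δ) (hm : 0 < m) (τ : α ≃ β) :
    ∀ (n : ℕ) (I : Finset α), I.card = n → (n : ℝ) ≤ δ / 2 * m →
      (d * (δ / 2) ^ 2 * m) ^ n * (NSet R I τ).card ≤ ((ZSet R ∅).card : ℝ) := by
  have hδ0 := H.δpos
  have hd := H.dpos
  intro n
  induction n with
  | zero => intro I hI; rw [card_eq_zero] at hI; subst hI; simp [NSet, ZSet]
  | succ n ih =>
    intro I hI hn
    obtain ⟨a, ha⟩ : I.Nonempty := card_pos.1 (by omega)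
    have h := N_small H hm I (by rw [hI]; exact hn) τ a ha
    have := ih (I.erase a) (by rw [card_erase_of_mem ha]; omega) (by push_cast at hn; linarith)
    refine le_trans ?_ this
    rw [pow_succ, mul_assoc]
    exact mul_le_mul_of_nonneg_left h (by positivity)

lemma N_triv (hA : Fintype.card α = m) (hB : Fintype.card β = m) (τ : α ≃ β) (I : Finset α) :
    (NSet R I τ).card ≤ m ^ (m - I.card) := by
  have : m ^ (m - I.card) = (univ : Finset ({x // x ∈ Iᶜ} → β)).card := by
    rw [card_univ, Fintype.card_fun, hB, Fintype.card_coe, card_compl, hA]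
  rw [this]
  refine card_le_card_of_injOn (fun σ x => σ x.1) (fun _ _ => mem_coe.2 (mem_univ _)) ?_
  intro σ hσ σ' hσ' h
  simp only [NSet, coe_filter, mem_univ, true_and, Set.mem_ofPred_eq] at hσ hσ'
  ext x
  by_cases hx : x ∈ I
  · rw [hσ.2 x hx, hσ'.2 x hx]
  · exact congrFun h ⟨x, by simpa using hx⟩

lemma Z_pos_bound (H : Hyp R m d δ) (hm : 0 < m) (hB : Fintype.card β = m) :
    (d * (δ / 2) ^ 2) ^ m * (m : ℝ) ^ m ≤ Real.exp 1 ^ m * ((ZSet R ∅).card : ℝ) := by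
  have hδ0 := H.δpos
  have hd := H.dpos
  have h1 := Z_lower H hm hB m univ (by rw [card_univ, H.cardA])
  have h2 : (ZSet R (univ : Finset α)).card = m.factorial := by
    have : ZSet R (univ : Finset α) = univ := by simp [ZSet]
    rw [this, card_univ, Fintype.card_equiv (Fintype.equivOfCardEq (H.cardA.trans hB.symm)),
      H.cardA]
  rw [h2] at h1
  have h3 := Real.pow_div_factorial_le_exp (m : ℝ) (by positivity) m
  rw [div_le_iff₀ (by positivity)] at h3
  have h4 : Real.exp (m : ℝ) = Real.exp 1 ^ m := by rw [← Real.exp_nat_mul]; simp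
  rw [h4] at h3
  calc _ ≤ (d * (δ / 2) ^ 2) ^ m * (Real.exp 1 ^ m * m.factorial) := by gcongr
    _ = Real.exp 1 ^ m * ((d * (δ / 2) ^ 2) ^ m * m.factorial) := by ring
    _ ≤ _ := by gcongr

/-- The spread constant. -/
noncomputable def spreadC (d δ : ℝ) : ℝ :=
  (max 1 (Real.exp 1 / (d * (δ / 2) ^ 2))) ^ (⌈2 / δ⌉₊ + 1)

lemma core (H : Hyp R m d δ) (hm : 0 < m) (hB : Fintype.card β = m) (τ : α ≃ β)
    (I : Finset α) :
    ((NSet R I τ).card : ℝ) ≤ (spreadC d δ / m) ^ I.card * (ZSet R ∅).card := by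
  have hδ0 := H.δpos
  have hd := H.dpos
  set c := d * (δ / 2) ^ 2 with hc
  have hcpos : 0 < c := by positivity
  set K := max 1 (Real.exp 1 / c) with hK
  have hK1 : 1 ≤ K := le_max_left _ _
  have hKc : Real.exp 1 / c ≤ K := le_max_right _ _
  have hmr : (0 : ℝ) < m := by positivity
  set k := I.card with hk
  have hkm : k ≤ m := by rw [hk, ← H.cardA]; exact card_le_univ _
  rw [div_pow, div_mul_eq_mul_div, le_div_iff₀ (by positivity)]
  rcases le_or_gt (k : ℝ) (δ / 2 * m) with h | h
  · have h1 := N_upper H hm τ k I rfl h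
    have h2 : 1 ≤ spreadC d δ * c := by
      have : K ≤ spreadC d δ := le_self_pow₀ hK1 (by omega)
      have h3 : Real.exp 1 / c ≤ spreadC d δ := hKc.trans this
      rw [div_le_iff₀ hcpos] at h3
      exact (Real.one_le_exp (by norm_num)).trans h3
    have hCpos : 0 ≤ spreadC d δ := by
      have : 0 ≤ K := by linarith
      exact pow_nonneg this _
    rw [← hc, mul_pow] at h1
    calc ((NSet R I τ).card : ℝ) * m ^ k ≤ (spreadC d δ * c) ^ k * (((NSet R I τ).card : ℝ) * m ^ k) :=
          le_mul_of_one_le_left (by positivity) (one_le_pow₀ h2)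
      _ = spreadC d δ ^ k * (c ^ k * m ^ k * (NSet R I τ).card) := by rw [mul_pow]; ring
      _ ≤ _ := by gcongr
  · have h1 := Z_pos_bound H hm hB
    rw [← hc] at h1
    have h2 : ((NSet R I τ).card : ℝ) ≤ m ^ (m - k) := by
      exact_mod_cast N_triv H.cardA hB τ I
    have h3 : ((NSet R I τ).card : ℝ) * m ^ k ≤ m ^ m := by
      calc _ ≤ (m : ℝ) ^ (m - k) * m ^ k := by gcongr
        _ = _ := by rw [← pow_add]; congr 1; omega
    have h4 : (m : ℝ) ^ m ≤ (Real.exp 1 / c) ^ m * (ZSet R ∅).card := by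
      rw [div_pow, div_mul_eq_mul_div, le_div_iff₀ (by positivity)]
      linarith
    have h5 : m ≤ (⌈2 / δ⌉₊ + 1) * k := by
      have : (2 / δ) ≤ (⌈2 / δ⌉₊ : ℝ) := Nat.le_ceil _
      have h6 : (m : ℝ) ≤ 2 / δ * k := by
        rw [div_mul_eq_mul_div, le_div_iff₀ hδ0]; linarith
      have h7 : (m : ℝ) ≤ (⌈2 / δ⌉₊ : ℝ) * k := h6.trans (by gcongr)
      have h8 : m ≤ ⌈2 / δ⌉₊ * k := by exact_mod_cast h7
      nlinarith
    have h6 : (Real.exp 1 / c) ^ m ≤ spreadC d δ ^ k := by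
      have : spreadC d δ ^ k = K ^ ((⌈2 / δ⌉₊ + 1) * k) := by rw [pow_mul]; rfl
      rw [this]
      calc _ ≤ K ^ m := by gcongr
        _ ≤ _ := pow_le_pow_right₀ hK1 h5
    refine h3.trans (h4.trans ?_)
    gcongr

lemma Z_pos (H : Hyp R m d δ) (hm : 0 < m) (hB : Fintype.card β = m) :
    (ZSet R (∅ : Finset α)).Nonempty := by
  have hδ0 := H.δpos
  have hd := H.dpos
  rw [← card_pos]
  have h1 := Z_pos_bound H hm hB
  by_contra h
  have : (ZSet R (∅ : Finset α)).card = 0 := by omega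
  rw [this] at h1
  have : 0 < (d * (δ / 2) ^ 2) ^ m * (m : ℝ) ^ m := by positivity
  simp at h1
  linarith

end Core

section Glue
variable {V : Type} [Fintype V] [DecidableEq V]

/-- The subgraph associated with a bijection between the two parts. -/
def toSub (G : SimpleGraph V) (A : Finset V) (σ : {v // v ∈ A} ≃ {v // v ∈ Aᶜ})
    (hσ : ∀ a, G.Adj a.1 (σ a).1) : G.Subgraph where
  verts := Set.univ
  Adj u v := (∃ h : u ∈ A, (σ ⟨u, h⟩).1 = v) ∨ (∃ h : v ∈ A, (σ ⟨v, h⟩).1 = u)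
  adj_sub := by
    rintro u v (⟨h, rfl⟩ | ⟨h, rfl⟩)
    · exact hσ ⟨u, h⟩
    · exact (hσ ⟨v, h⟩).symm
  edge_vert := fun _ => Set.mem_univ _
  symm := ⟨fun u v h => h.symm⟩

lemma toSub_perfect (G : SimpleGraph V) (A : Finset V) (σ : {v // v ∈ A} ≃ {v // v ∈ Aᶜ})
    (hσ : ∀ a, G.Adj a.1 (σ a).1) : (toSub G A σ hσ).IsPerfectMatching := by
  refine ⟨?_, fun v => Set.mem_univ v⟩
  intro v _
  by_cases hv : v ∈ A
  · refine ⟨(σ ⟨v, hv⟩).1, Or.inl ⟨hv, rfl⟩, ?_⟩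
    rintro w (⟨h, rfl⟩ | ⟨h, hw⟩)
    · rfl
    · have := (σ ⟨w, h⟩).2
      rw [hw, mem_compl] at this
      exact absurd hv this
  · have hv' : v ∈ Aᶜ := mem_compl.2 hv
    refine ⟨(σ.symm ⟨v, hv'⟩).1, Or.inr ⟨(σ.symm ⟨v, hv'⟩).2, by simp⟩, ?_⟩
    rintro w (⟨h, _⟩ | ⟨h, hw⟩)
    · exact absurd h hv
    · have : σ ⟨w, h⟩ = ⟨v, hv'⟩ := Subtype.ext hw
      rw [← this]; simp

lemma mk_mem_toSub (G : SimpleGraph V) (A : Finset V) (σ : {v // v ∈ A} ≃ {v // v ∈ Aᶜ})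
    (hσ : ∀ a, G.Adj a.1 (σ a).1) (a : {v // v ∈ A}) (b : {v // v ∈ Aᶜ})
    (h : s(a.1, b.1) ∈ (toSub G A σ hσ).edgeSet) : σ a = b := by
  rw [SimpleGraph.Subgraph.mem_edgeSet] at h
  rcases h with ⟨h, h'⟩ | ⟨h, h'⟩
  · exact Subtype.ext h'
  · exact absurd h (mem_compl.1 b.2)

lemma card_filter_sub (A : Finset V) (p : V → Prop) :
    ((univ : Finset {v // v ∈ A}).filter fun x => p x.1).card = (A.filter p).card := by
  rw [← card_map (Function.Embedding.subtype _)]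
  congr 1
  ext x
  simp only [mem_map, mem_filter, mem_univ, true_and, Function.Embedding.subtype_apply]
  constructor
  · rintro ⟨y, hy, rfl⟩; exact ⟨y.2, hy⟩
  · rintro ⟨h1, h2⟩; exact ⟨⟨x, h1⟩, h2, rfl⟩

lemma hyp_of_super (d₀ δ : ℝ) (hd₀ : 0 < d₀) (hδ : 0 < δ) (G : SimpleGraph V) (A : Finset V)
    (m : ℕ) (hm : 0 < m) (hd : d₀ ≤ edgeDensityR G A Aᶜ)
    (hs : IsSuperRegularPair G A Aᶜ (min (δ / 2) (d₀ / 2)) δ m) :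
    Hyp (fun (a : {v // v ∈ A}) (b : {v // v ∈ Aᶜ}) => G.Adj a.1 b.1) m (d₀ / 2) δ := by
  obtain ⟨hreg, hA, hB, h1, h2⟩ := hs
  have hmr : (0 : ℝ) < m := by positivity
  refine ⟨by positivity, hδ, by rw [Fintype.card_coe, hA], ?_, ?_, ?_⟩
  · intro a
    rw [card_filter_sub Aᶜ (fun v => G.Adj a.1 v)]
    exact h1 a.1 a.2
  · intro b
    rw [card_filter_sub A (fun v => G.Adj v b.1)]
    simp only [G.adj_comm _ b.1]
    exact h2 b.1 b.2
  · intro X Y hX hY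
    set X' : Finset V := X.map (Function.Embedding.subtype _) with hX'
    set Y' : Finset V := Y.map (Function.Embedding.subtype _) with hY'
    have hXc : X'.card = X.card := card_map _
    have hYc : Y'.card = Y.card := card_map _
    have hε : min (δ / 2) (d₀ / 2) * m ≤ δ / 2 * m :=
      mul_le_mul_of_nonneg_right (min_le_left _ _) hmr.le
    have key := hreg X' (by intro x hx; obtain ⟨y, _, rfl⟩ := mem_map.1 hx; exact y.2)
      Y' (by intro x hx; obtain ⟨y, _, rfl⟩ := mem_map.1 hx; exact y.2)
      (by rw [hA, hXc]; linarith) (by rw [hB, hYc]; linarith)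
    have hlow : d₀ / 2 ≤ edgeDensityR G X' Y' := by
      have := (abs_le.1 key).1
      have := min_le_right (δ / 2) (d₀ / 2)
      linarith
    have hXp : (0 : ℝ) < X.card := lt_of_lt_of_le (by positivity) hX
    have hYp : (0 : ℝ) < Y.card := lt_of_lt_of_le (by positivity) hY
    unfold edgeDensityR at hlow
    rw [hXc, hYc, le_div_iff₀ (by positivity)] at hlow
    refine hlow.trans (le_of_eq ?_)
    rw [hX', sum_map]
    refine sum_congr rfl fun x _ => ?_
    rw [hY', filter_map, card_map]
    rfl

end Glue

theorem spread_perfect_matchings_eps_delta_super_regular (d₀ δ : ℝ)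
    (hd₀ : 0 < d₀) (hδ : 0 < δ) :
    ∃ ε C : ℝ, 0 < ε ∧ 0 < C ∧
      ∀ (V : Type) [Fintype V] [DecidableEq V] (G : SimpleGraph V) (A : Finset V) (m : ℕ),
        A.card = m → Aᶜ.card = m →
        (∀ u v : V, G.Adj u v → (u ∈ A ↔ v ∉ A)) →
        d₀ ≤ edgeDensityR G A Aᶜ →
        IsSuperRegularPair G A Aᶜ ε δ m →
        ∃ μ : PMF {M : G.Subgraph // M.IsPerfectMatching},
          ∀ (k : ℕ) (e : Fin k → Sym2 V), Function.Injective e →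
            (∀ i, e i ∈ G.edgeSet) →
            μ.toOuterMeasure {M | ∀ i, e i ∈ (M : G.Subgraph).edgeSet} ≤
              ENNReal.ofReal ((C / m) ^ k) := by
  refine ⟨min (δ / 2) (d₀ / 2), spreadC (d₀ / 2) δ, by positivity, ?_, ?_⟩
  · exact pow_pos (lt_of_lt_of_le one_pos (le_max_left _ _)) _
  intro V _ _ G A m hA hB hbip hd hs
  have hm : 0 < m := by
    rcases Nat.eq_zero_or_pos m with h | h
    · rw [h, card_eq_zero] at hA
      subst hA
      simp [edgeDensityR] at hd
      linarith
    · exact h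
  have H := hyp_of_super d₀ δ hd₀ hδ G A m hm hd hs
  have hB' : Fintype.card {v // v ∈ Aᶜ} = m := by rw [Fintype.card_coe, hB]
  set R := (fun (a : {v // v ∈ A}) (b : {v // v ∈ Aᶜ}) => G.Adj a.1 b.1) with hR
  have hne := Z_pos H hm hB'
  have hmem : ∀ σ : {v // v ∈ A} ≃ {v // v ∈ Aᶜ}, σ ∈ ZSet R ∅ ↔ ∀ a, G.Adj a.1 (σ a).1 := by
    intro σ; simp [ZSet, hR]
  obtain ⟨σ₀, hσ₀⟩ := id hne
  let f : ({v // v ∈ A} ≃ {v // v ∈ Aᶜ}) → {M : G.Subgraph // M.IsPerfectMatching} := fun σ =>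
    if h : ∀ a, G.Adj a.1 (σ a).1 then ⟨toSub G A σ h, toSub_perfect G A σ h⟩
    else ⟨toSub G A σ₀ ((hmem _).1 hσ₀), toSub_perfect _ _ _ _⟩
  refine ⟨(PMF.uniformOfFinset (ZSet R ∅) hne).map f, ?_⟩
  intro k e he heG
  have hpair : ∀ i, ∃ p : {v // v ∈ A} × {v // v ∈ Aᶜ}, e i = s(p.1.1, p.2.1) := by
    intro i
    have hi := heG i
    induction hx : e i using Sym2.ind with
    | _ u v =>
      rw [hx, SimpleGraph.mem_edgeSet] at hi
      have := hbip u v hi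
      by_cases hu : u ∈ A
      · exact ⟨(⟨u, hu⟩, ⟨v, mem_compl.2 (this.1 hu)⟩), rfl⟩
      · have hv : v ∈ A := by tauto
        exact ⟨(⟨v, hv⟩, ⟨u, mem_compl.2 hu⟩), Sym2.eq_swap⟩
  choose p hp using hpair
  rw [PMF.toOuterMeasure_map_apply, PMF.toOuterMeasure_uniformOfFinset_apply]
  set E := (ZSet R ∅).filter fun σ =>
    σ ∈ f ⁻¹' {M | ∀ i, e i ∈ (M : G.Subgraph).edgeSet} with hE
  have hEmem : ∀ σ ∈ E, (∀ a, G.Adj a.1 (σ a).1) ∧ ∀ i, σ (p i).1 = (p i).2 := by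
    intro σ hσ
    rw [hE, mem_filter] at hσ
    have h1 := (hmem σ).1 hσ.1
    refine ⟨h1, fun i => ?_⟩
    have h2 := hσ.2 i
    have h3 : f σ = ⟨toSub G A σ h1, toSub_perfect G A σ h1⟩ := dif_pos h1
    rw [h3, hp i] at h2
    exact mk_mem_toSub G A σ h1 _ _ h2
  rcases E.eq_empty_or_nonempty with h0 | ⟨τ, hτ⟩
  · rw [h0]; simp
  have hτ' := hEmem τ hτ
  have hinj : Function.Injective fun i => (p i).1 := by
    intro i j hij
    apply he
    have hij' : (p i).1 = (p j).1 := hij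
    have : (p i).2 = (p j).2 := by rw [← hτ'.2 i, ← hτ'.2 j, hij']
    rw [hp i, hp j, hij', this]
  set I : Finset {v // v ∈ A} := univ.image fun i => (p i).1 with hI
  have hIc : I.card = k := by rw [hI, card_image_of_injective _ hinj]; simp
  have hsub : E ⊆ NSet R I τ := by
    intro σ hσ
    have h := hEmem σ hσ
    simp only [NSet, mem_filter, mem_univ, true_and]
    refine ⟨fun x _ => h.1 x, fun x hx => ?_⟩
    obtain ⟨i, _, rfl⟩ := mem_image.1 hx
    rw [h.2 i, hτ'.2 i]
  have hcore := core H hm hB' τ I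
  rw [hIc] at hcore
  have hZpos : (0 : ℝ) < (ZSet R ∅).card := by exact_mod_cast card_pos.2 ⟨σ₀, hσ₀⟩
  have hfin : (E.card : ℝ) / (ZSet R ∅).card ≤ (spreadC (d₀ / 2) δ / m) ^ k := by
    rw [div_le_iff₀ hZpos]
    refine le_trans ?_ hcore
    exact_mod_cast card_le_card hsub
  refine le_trans (le_of_eq ?_) (ENNReal.ofReal_le_ofReal hfin)
  rw [ENNReal.ofReal_div_of_pos hZpos, ENNReal.ofReal_natCast, ENNReal.ofReal_natCast]
end
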